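/- Let H be either H1 or H2. For all integers k ≥ 1 and r with 0 ≤ r ≤ k such that k−r and r are both odd, GR_k((k−r)K3, rH) = 8·5^((k−r−1)/2)·17^((r−1)/2) + 1. -/

import Mathlib

open SimpleGraph

/-- A rainbow triangle in an edge-coloring of a complete graph: three distinct
vertices whose three pairwise edges receive three pairwise distinct colors. -/
def HasRainbowTriangle {n k : ℕ} (c : Fin n → Fin n → Fin k) : Prop :=
  ∃ u v w : Fin n, u ≠ v ∧ u ≠ w ∧ v ≠ w ∧
    c u v ≠ c u w ∧ c u v ≠ c v w ∧ c u w ≠ c v w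

/-- A Gallai `k`-coloring of `K_n`: a symmetric edge-coloring with no rainbow triangle. -/
def IsGallaiColoring {n k : ℕ} (c : Fin n → Fin n → Fin k) : Prop :=
  (∀ u v, c u v = c v u) ∧ ¬ HasRainbowTriangle c

/-- A monochromatic copy of the graph `F` in color `i`: an injection of the vertices
of `F` into the vertices of `K_n` mapping every edge of `F` to an edge colored `i`. -/
def HasMonoCopy {V : Type} (F : SimpleGraph V) {n k : ℕ}
    (c : Fin n → Fin n → Fin k) (i : Fin k) : Prop :=
  ∃ f : V → Fin n, Function.Injective f ∧ ∀ a b, F.Adj a b → c (f a) (f b) = i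

/-- The Gallai-Ramsey number `GR(F₁, …, F_k)`: the least `n` such that every Gallai
`k`-coloring of `K_n` contains, for some color `i`, a monochromatic copy of `Fᵢ`
in color `i`. -/
noncomputable def GR (k : ℕ) (F : Fin k → Σ V : Type, SimpleGraph V) : ℕ :=
  sInf {n : ℕ | ∀ c : Fin n → Fin n → Fin k, IsGallaiColoring c →
    ∃ i : Fin k, HasMonoCopy (F i).2 c i}

/-- The triangle `K₃`. -/
def GK3 : SimpleGraph (Fin 3) := ⊤

/-- The path `P₃` on three vertices (edges 0–1 and 1–2). -/
def GP3 : SimpleGraph (Fin 3) := SimpleGraph.fromRel (fun a _ => a = 1)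

/-- `H₁`: a `K₄` on `{0,1,2,3}` together with the extra vertex `4` adjacent to
exactly the vertex `3`. -/
def GH1 : SimpleGraph (Fin 5) :=
  SimpleGraph.fromRel (fun a b => (a ≠ 4 ∧ b ≠ 4) ∨ (a = 3 ∧ b = 4))

/-- `H₂`: `K₅` minus the two edges 0–1 and 1–2 of a path on three vertices. -/
def GH2 : SimpleGraph (Fin 5) :=
  (⊤ : SimpleGraph (Fin 5)) \
    SimpleGraph.fromRel (fun a b => (a = 0 ∧ b = 1) ∨ (a = 1 ∧ b = 2))

/-- `H₃`: `K₅` minus the edge 0–1. -/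
def GH3 : SimpleGraph (Fin 5) :=
  (⊤ : SimpleGraph (Fin 5)) \ SimpleGraph.fromRel (fun a b => a = 0 ∧ b = 1)
/-- The family of graphs for `GR_k((k-r)K₃, rH)`: the graph `H` in each of the first
`r` colors and the triangle `K₃` in each of the remaining `k - r` colors. -/
def mixKH (k r : ℕ) (H : SimpleGraph (Fin 5)) : Fin k → Σ V : Type, SimpleGraph V :=
  fun i => if (i : ℕ) < r then ⟨Fin 5, H⟩ else ⟨Fin 3, GK3⟩

/-!
Upper bound: induct on the number of vertices, allowing each color to forbid an edge, a triangle, a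
paw or `H₂`. By Gallai's structure theorem the coloring is either a join in one color or a blow-up
of a coloring with two colors, both connected. A part of a join or a fiber of a blow-up is joined to
a further vertex in the relevant color, so there a triangle can be weakened to an edge and `H₂` to a
paw; a connected graph that avoids the paw but not the triangle is itself a triangle. Choosing a
clique in each fiber, the two-color Ramsey bounds `R(K₃, K₃) ≤ 6`, `R(K₃, H₂) ≤ 9` and
`R(H₂, H₂) ≤ 18` control the blow-up.

Lower bound: take the lexicographic product, one factor for each pair of colors, of colorings of
`K₅` and `K₁₇` by a 5-cycle or a Paley graph and its complement. A color left without a partner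
contributes a monochromatic `K₂` or `K₄`, where `K₄` has to be the innermost factor. As `H` is
connected and contains `K₄`, which does not map to the Paley graph, no factor creates a copy of it.
-/

namespace GallaiRamsey

open Finset
open scoped Classical

section Patterns

variable {V : Type*} {G : SimpleGraph V} {s t : Set V}

/-- `G` has no paw (a triangle with a pendant edge) inside `s`. -/
def PawFreeOn (G : SimpleGraph V) (s : Set V) : Prop :=
  ∀ ⦃x y z w⦄, x ∈ s → y ∈ s → z ∈ s → w ∈ s →
    G.Adj x y → G.Adj x z → G.Adj y z → G.Adj x w → w = y ∨ w = z

/-- `G` has no copy of `H₂` inside `s`. As `H₂` is the join of a vertex and a paw, this is expressed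
by paw-free neighborhoods. -/
def H2FreeOn (G : SimpleGraph V) (s : Set V) : Prop :=
  ∀ v ∈ s, PawFreeOn G (s ∩ G.neighborSet v)

theorem PawFreeOn.subset (hst : s ⊆ t) (h : PawFreeOn G t) : PawFreeOn G s :=
  fun _ _ _ _ hx hy hz hw ↦ h (hst hx) (hst hy) (hst hz) (hst hw)

theorem H2FreeOn.subset (hst : s ⊆ t) (h : H2FreeOn G t) : H2FreeOn G s :=
  fun v hv ↦ (h v (hst hv)).subset (Set.inter_subset_inter_left _ hst)

theorem exists_adj_of_not_cliqueFreeOn_two (h : ¬ G.CliqueFreeOn s 2) :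
    ∃ x ∈ s, ∃ y ∈ s, G.Adj x y := by
  rw [cliqueFreeOn_two, Set.Pairwise] at h
  push Not at h
  obtain ⟨x, hx, y, hy, -, hxy⟩ := h
  exact ⟨x, hx, y, hy, not_not.1 hxy⟩

theorem not_cliqueFreeOn_two_of_adj {x y : V} (hxy : G.Adj x y) (hx : x ∈ s)
    (hy : y ∈ s) : ¬ G.CliqueFreeOn s 2 :=
  fun h ↦ (cliqueFreeOn_two G).1 h hx hy hxy.ne hxy

theorem exists_isNClique_of_not_cliqueFreeOn {n : ℕ} (h : ¬ G.CliqueFreeOn s n) :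
    ∃ T : Finset V, (T : Set V) ⊆ s ∧ G.IsNClique n T := by
  simpa [CliqueFreeOn] using h

theorem PawFreeOn.card_le_three_of_isClique {S : Finset V} (h : PawFreeOn G S)
    (hS : G.IsClique S) : #S ≤ 3 := by
  obtain rfl | ⟨x, hx⟩ := S.eq_empty_or_nonempty
  · simp
  by_contra! hcard
  have hcard' : 2 < #(S.erase x) := by rw [card_erase_of_mem hx]; omega
  obtain ⟨y, hy, z, hz, w, hw, hyz, hyw, hzw⟩ := two_lt_card.1 hcard'
  simp only [mem_erase] at hy hz hw
  have hadj {a b : V} (ha : a ∈ S) (hb : b ∈ S) (hab : a ≠ b) : G.Adj a b := hS ha hb hab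
  have := h hx hy.2 hz.2 hw.2 (hadj hx hy.2 hy.1.symm) (hadj hx hz.2 hz.1.symm)
    (hadj hy.2 hz.2 hyz) (hadj hx hw.2 hw.1.symm)
  tauto

theorem H2FreeOn.card_le_four_of_isClique {S : Finset V} (h : H2FreeOn G S)
    (hS : G.IsClique S) : #S ≤ 4 := by
  obtain rfl | ⟨v, hv⟩ := S.eq_empty_or_nonempty
  · simp
  have hsub : (S.erase v : Set V) ⊆ S ∩ G.neighborSet v := fun w hw ↦ by
    have hw := mem_erase.1 hw
    exact ⟨hw.2, hS hv hw.2 hw.1.symm⟩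
  have := ((h v hv).subset hsub).card_le_three_of_isClique
    (hS.subset (hsub.trans Set.inter_subset_left))
  rw [card_erase_of_mem hv] at this
  omega

theorem H2FreeOn.card_adj_le_one {Q : Finset V} {w : V} (h : H2FreeOn G s)
    (hQ : G.IsNClique 4 Q) (hQs : (Q : Set V) ⊆ s) (hw : w ∈ s) (hwQ : w ∉ Q) :
    #{q ∈ Q | G.Adj w q} ≤ 1 := by
  by_contra! hcard
  obtain ⟨a, ha, b, hb, hab⟩ := one_lt_card.1 hcard
  simp only [mem_filter] at ha hb
  have hrest : #((Q.erase a).erase b) = 2 := by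
    rw [card_erase_of_mem (mem_erase.2 ⟨hab.symm, hb.1⟩), card_erase_of_mem ha.1, hQ.card_eq]
  obtain ⟨p, q, hpq, hpq'⟩ := card_eq_two.1 hrest
  have hp : p ∈ (Q.erase a).erase b := by simp [hpq']
  have hq : q ∈ (Q.erase a).erase b := by simp [hpq']
  simp only [mem_erase] at hp hq
  have hadj {x y : V} (hx : x ∈ Q) (hy : y ∈ Q) (hxy : x ≠ y) : G.Adj x y := hQ.isClique hx hy hxy
  obtain rfl | rfl := h a (hQs ha.1) ⟨hQs hb.1, hadj ha.1 hb.1 hab⟩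
    ⟨hQs hp.2.2, hadj ha.1 hp.2.2 hp.2.1.symm⟩ ⟨hQs hq.2.2, hadj ha.1 hq.2.2 hq.2.1.symm⟩
    ⟨hw, ha.2.symm⟩ (hadj hb.1 hp.2.2 hp.1.symm) (hadj hb.1 hq.2.2 hq.1.symm)
    (hadj hp.2.2 hq.2.2 hpq) hb.2.symm
  · exact hwQ hp.2.2
  · exact hwQ hq.2.2

theorem PawFreeOn.cliqueFreeOn_three_or_card_le [Fintype V]
    (h : PawFreeOn G Set.univ) (hG : G.Preconnected) :
    G.CliqueFreeOn Set.univ 3 ∨ Fintype.card V ≤ 3 := by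
  refine or_iff_not_imp_left.2 fun htri ↦ ?_
  obtain ⟨T, -, hT⟩ := exists_isNClique_of_not_cliqueFreeOn htri
  have hclosed {x w : V} (hx : x ∈ T) (hxw : G.Adj x w) : w ∈ T := by
    have hrest : #(T.erase x) = 2 := by rw [card_erase_of_mem hx, hT.card_eq]
    obtain ⟨y, z, hyz, hyz'⟩ := card_eq_two.1 hrest
    have hy : y ∈ T.erase x := by simp [hyz']
    have hz : z ∈ T.erase x := by simp [hyz']
    rw [mem_erase] at hy hz
    obtain rfl | rfl := h (Set.mem_univ x) (Set.mem_univ y) (Set.mem_univ z) (Set.mem_univ w)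
      (hT.isClique hx hy.2 hy.1.symm) (hT.isClique hx hz.2 hz.1.symm) (hT.isClique hy.2 hz.2 hyz)
      hxw
    exacts [hy.2, hz.2]
  obtain ⟨x, hx⟩ : T.Nonempty := card_pos.1 (hT.card_eq ▸ three_pos)
  have hTuniv : T = univ := eq_univ_of_forall fun y ↦ by
    by_contra hy
    obtain ⟨p⟩ := hG x y
    obtain ⟨d, -, hd, hd'⟩ := p.exists_boundary_dart (T : Set V) hx hy
    exact hd' (hclosed hd d.adj)
  rw [← card_univ, ← hTuniv, hT.card_eq]

end Patterns

section CompleteBetween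

variable {V : Type*} {G : SimpleGraph V} {s t : Set V}

theorem subset_inter_neighborSet_of_isCompleteBetween {b : V} (hst : G.IsCompleteBetween s t)
    (hb : b ∈ t) : s ⊆ (s ∪ t) ∩ G.neighborSet b :=
  fun _ ha ↦ ⟨Or.inl ha, (hst ha hb).symm⟩

theorem cliqueFreeOn_of_isCompleteBetween {n : ℕ} (hst : G.IsCompleteBetween s t)
    (ht : t.Nonempty) (h : G.CliqueFreeOn (s ∪ t) (n + 1)) : G.CliqueFreeOn s n := by
  obtain ⟨b, hb⟩ := ht
  exact (h.of_succ G (Or.inr hb)).subset G (subset_inter_neighborSet_of_isCompleteBetween hst hb)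

theorem H2FreeOn.pawFreeOn_of_isCompleteBetween (hst : G.IsCompleteBetween s t)
    (ht : t.Nonempty) (h : H2FreeOn G (s ∪ t)) : PawFreeOn G s := by
  obtain ⟨b, hb⟩ := ht
  exact (h b (Or.inr hb)).subset (subset_inter_neighborSet_of_isCompleteBetween hst hb)

theorem H2FreeOn.cliqueFreeOn_three_of_isCompleteBetween (hst : G.IsCompleteBetween s t)
    (ht : t.Nontrivial) (h : H2FreeOn G (s ∪ t)) : G.CliqueFreeOn s 3 := by
  intro T hT hclique
  obtain ⟨p, hp, q, hq, hpq⟩ := ht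
  obtain ⟨x, y, z, hxy, hxz, hyz, rfl⟩ := is3Clique_iff.1 hclique
  have hx : x ∈ s := hT (by simp)
  have hy : y ∈ s := hT (by simp)
  have hz : z ∈ s := hT (by simp)
  obtain rfl | rfl := h x (Or.inl hx) ⟨Or.inl hy, hxy⟩ ⟨Or.inl hz, hxz⟩ ⟨Or.inr hp, hst hx hp⟩
    ⟨Or.inr hq, hst hx hq⟩ hyz (hst hy hp) (hst hz hp) (hst hy hq)
  · exact G.irrefl (hst hz hq)
  · exact hpq rfl

theorem H2FreeOn.cliqueFreeOn_two_of_isCompleteBetween {T : Finset V}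
    (hst : G.IsCompleteBetween s T) (hT : ¬ G.CliqueFreeOn T 2) (hT' : 3 ≤ #T)
    (h : H2FreeOn G (s ∪ T)) : G.CliqueFreeOn s 2 := by
  by_contra hs
  obtain ⟨p, hp, q, hq, hpq⟩ := exists_adj_of_not_cliqueFreeOn_two hs
  obtain ⟨x, hx, y, hy, hxy⟩ := exists_adj_of_not_cliqueFreeOn_two hT
  obtain ⟨z, hz, hzxy⟩ : ∃ z ∈ T, z ∉ ({x, y} : Finset V) :=
    exists_mem_notMem_of_card_lt_card (card_le_two.trans_lt hT')
  obtain rfl | rfl := h p (Or.inl hp) ⟨Or.inl hq, hpq⟩ ⟨Or.inr hx, hst hp hx⟩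
    ⟨Or.inr hy, hst hp hy⟩ ⟨Or.inr hz, hst hp hz⟩ (hst hq hx) (hst hq hy) hxy (hst hq hz)
  · simp at hzxy
  · simp at hzxy

theorem preconnected_of_isCompleteBetween (hst : G.IsCompleteBetween s t) (hs : s.Nonempty)
    (ht : t.Nonempty) (huniv : s ∪ t = Set.univ) : G.Preconnected := by
  obtain ⟨⟨a, ha⟩, b, hb⟩ := hs, ht
  have hreach (x : V) : G.Reachable a x := by
    obtain hx | hx : x ∈ s ∪ t := huniv ▸ Set.mem_univ x
    · exact (hst ha hb).reachable.trans (hst hx hb).symm.reachable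
    · exact (hst ha hx).reachable
  exact fun x y ↦ (hreach x).symm.trans (hreach y)

end CompleteBetween

section TwoColorRamsey

variable {V : Type*} {G H : SimpleGraph V} {S : Finset V} {v : V}

theorem card_lt_of_cliqueFreeOn_of_isClique {n : ℕ} (h : G.CliqueFreeOn S n)
    (hS : G.IsClique S) : #S < n := by
  by_contra! hle
  exact h.mono G hle subset_rfl ⟨hS, rfl⟩

theorem isClique_right_of_isClique_sup {s : Set V} (h : (G ⊔ H).IsClique s)
    (hG : G.CliqueFreeOn s 2) : H.IsClique s :=
  fun _ hx _ hy hxy ↦ (h hx hy hxy).resolve_left ((cliqueFreeOn_two G).1 hG hx hy hxy)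

theorem coe_filter_adj : (({w ∈ S | G.Adj v w} : Finset V) : Set V) = ↑S ∩ G.neighborSet v := by
  ext w
  simp

theorem card_le_card_adj_add_card_adj (h : (G ⊔ H).IsClique S) (hv : v ∈ S) :
    #S ≤ #{w ∈ S | G.Adj v w} + #{w ∈ S | H.Adj v w} + 1 := by
  have hsub : S ⊆ insert v ({w ∈ S | G.Adj v w} ∪ {w ∈ S | H.Adj v w}) := fun w hw ↦ by
    by_cases hvw : v = w
    · simp [hvw]
    · have := (sup_adj ..).1 (h hv hw hvw)
      simp only [mem_insert, mem_union, mem_filter]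
      tauto
  have := card_le_card hsub
  have := card_insert_le v ({w ∈ S | G.Adj v w} ∪ {w ∈ S | H.Adj v w})
  have := card_union_le {w ∈ S | G.Adj v w} {w ∈ S | H.Adj v w}
  omega

theorem isClique_filter_adj_of_cliqueFreeOn_three (h : (G ⊔ H).IsClique S)
    (hG : G.CliqueFreeOn S 3) (hv : v ∈ S) : H.IsClique ({w ∈ S | G.Adj v w} : Finset V) := by
  rw [coe_filter_adj]
  exact isClique_right_of_isClique_sup (h.subset Set.inter_subset_left) (hG.of_succ G hv)

theorem card_adj_lt_of_cliqueFreeOn {n : ℕ} (h : (G ⊔ H).IsClique S) (hG : G.CliqueFreeOn S 3)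
    (hH : H.CliqueFreeOn S n) (hv : v ∈ S) : #{w ∈ S | G.Adj v w} < n :=
  card_lt_of_cliqueFreeOn_of_isClique (hH.subset H (filter_subset _ _))
    (isClique_filter_adj_of_cliqueFreeOn_three h hG hv)

theorem card_le_five_of_cliqueFreeOn_three (h : (G ⊔ H).IsClique S) (hG : G.CliqueFreeOn S 3)
    (hH : H.CliqueFreeOn S 3) : #S ≤ 5 := by
  obtain rfl | ⟨v, hv⟩ := S.eq_empty_or_nonempty
  · simp
  have := card_le_card_adj_add_card_adj h hv
  have := card_adj_lt_of_cliqueFreeOn h hG hH hv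
  have := card_adj_lt_of_cliqueFreeOn (sup_comm G H ▸ h) hH hG hv
  omega

theorem even_card_of_forall_odd_card_adj (h : ∀ v ∈ S, Odd #{w ∈ S | G.Adj v w}) :
    Even #S := by
  have hdegree (v : S) : (G.induce (S : Set V)).degree v = #{w ∈ S | G.Adj v w} := by
    rw [← card_neighborFinset_eq_degree, ← card_map (.subtype (· ∈ (S : Set V)))]
    congr 1
    ext w
    simp [and_comm]
  have := (G.induce (S : Set V)).even_card_odd_degree_vertices
  rw [filter_true_of_mem fun v _ ↦ hdegree v ▸ h v v.2] at this
  simpa using this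

theorem card_le_eight_of_cliqueFreeOn_three_of_cliqueFreeOn_four (h : (G ⊔ H).IsClique S)
    (hG : G.CliqueFreeOn S 3) (hH : H.CliqueFreeOn S 4) : #S ≤ 8 := by
  by_contra! hcard
  have hdegree {v : V} (hv : v ∈ S) : #S = 9 ∧ #{w ∈ S | G.Adj v w} = 3 := by
    have hGv := card_adj_lt_of_cliqueFreeOn h hG hH hv
    have hHv : #{w ∈ S | H.Adj v w} ≤ 5 :=
      card_le_five_of_cliqueFreeOn_three (h.subset (filter_subset _ _))
        (hG.subset G (filter_subset _ _)) (by rw [coe_filter_adj]; exact hH.of_succ H hv)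
    have := card_le_card_adj_add_card_adj h hv
    omega
  obtain ⟨v, hv⟩ : S.Nonempty := card_pos.1 (by omega)
  have hodd : ∀ w ∈ S, Odd #{u ∈ S | G.Adj w u} := fun w hw ↦ by
    rw [(hdegree hw).2]
    decide
  have heven := even_card_of_forall_odd_card_adj hodd
  rw [(hdegree hv).1] at heven
  exact absurd heven (by decide)

theorem H2FreeOn.three_le_card_adj {Q : Finset V} {w : V}
    (h : (G ⊔ H).IsClique S) (hH : H2FreeOn H S) (hQ : H.IsNClique 4 Q) (hQS : Q ⊆ S)
    (hw : w ∈ S) (hwQ : w ∉ Q) : 3 ≤ #{q ∈ Q | G.Adj w q} := by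
  have hsub : Q ⊆ {q ∈ Q | G.Adj w q} ∪ {q ∈ Q | H.Adj w q} := fun q hq ↦ by
    have := (sup_adj ..).1 (h hw (hQS hq) (ne_of_mem_of_not_mem hq hwQ).symm)
    simp only [mem_union, mem_filter]
    tauto
  have := hQ.card_eq ▸ (card_le_card hsub).trans (card_union_le _ _)
  have := hH.card_adj_le_one hQ (mod_cast hQS) hw hwQ
  omega

theorem H2FreeOn.card_le_eight_of_cliqueFreeOn_three (h : (G ⊔ H).IsClique S)
    (hG : G.CliqueFreeOn S 3) (hH : H2FreeOn H S) : #S ≤ 8 := by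
  by_cases hH4 : H.CliqueFreeOn S 4
  · exact card_le_eight_of_cliqueFreeOn_three_of_cliqueFreeOn_four h hG hH4
  obtain ⟨Q, hQS, hQ⟩ := exists_isNClique_of_not_cliqueFreeOn hH4
  have hQS : Q ⊆ S := mod_cast hQS
  have houtside : H.IsClique (S \ Q : Finset V) := by
    refine isClique_right_of_isClique_sup (h.subset (mod_cast sdiff_subset)) ?_
    by_contra hedge
    obtain ⟨u, hu, w, hw, huw⟩ := exists_adj_of_not_cliqueFreeOn_two hedge
    obtain ⟨hu, huQ⟩ := mem_sdiff.1 hu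
    obtain ⟨hw, hwQ⟩ := mem_sdiff.1 hw
    have hinter : ({q ∈ Q | G.Adj u q} ∩ {q ∈ Q | G.Adj w q}).Nonempty := by
      refine inter_nonempty_of_card_lt_card_add_card (filter_subset _ _) (filter_subset _ _) ?_
      have := hH.three_le_card_adj h hQ hQS hu huQ
      have := hH.three_le_card_adj h hQ hQS hw hwQ
      have := hQ.card_eq
      omega
    obtain ⟨q, hq⟩ := hinter
    simp only [mem_inter, mem_filter] at hq
    exact hG (t := {u, w, q}) (by simp [Set.insert_subset_iff, hu, hw, hQS hq.1.1])
      (is3Clique_triple_iff.2 ⟨huw, hq.1.2, hq.2.2⟩)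
  have := (hH.subset (mod_cast sdiff_subset)).card_le_four_of_isClique houtside
  have := card_sdiff_add_card_eq_card hQS
  have := hQ.card_eq
  omega

theorem PawFreeOn.isCompleteBetween_sdiff {T : Finset V} (h : (G ⊔ H).IsClique S)
    (hG : PawFreeOn G S) (hT : G.IsNClique 3 T) (hTS : T ⊆ S) :
    H.IsCompleteBetween T (S \ T : Finset V) := by
  intro x hx w hw
  obtain ⟨hw, hwT⟩ := mem_sdiff.1 hw
  refine (h (hTS hx) hw (ne_of_mem_of_not_mem hx hwT)).resolve_left fun hxw ↦ hwT ?_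
  obtain ⟨y, z, hyz, heq⟩ := card_eq_two.1 (hT.erase_of_mem hx).card_eq
  have hy : y ∈ T.erase x := by simp [heq]
  have hz : z ∈ T.erase x := by simp [heq]
  simp only [mem_erase] at hy hz
  obtain rfl | rfl := hG (hTS hx) (hTS hy.2) (hTS hz.2) hw (hT.isClique hx hy.2 hy.1.symm)
    (hT.isClique hx hz.2 hz.1.symm) (hT.isClique hy.2 hz.2 hyz) hxw
  · exact hy.2
  · exact hz.2

theorem PawFreeOn.exists_three_isNClique (h : (G ⊔ H).IsClique S) (hG : PawFreeOn G S)
    (hH : H2FreeOn H S) (hS : 9 ≤ #S) :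
    #S = 9 ∧ ∃ T₁ ⊆ S, ∃ T₂ ⊆ S, ∃ T₃ ⊆ S,
      G.IsNClique 3 T₁ ∧ G.IsNClique 3 T₂ ∧ G.IsNClique 3 T₃ ∧
      H.IsCompleteBetween T₁ T₂ ∧ H.IsCompleteBetween T₁ T₃ ∧ H.IsCompleteBetween T₂ T₃ := by
  obtain ⟨T₁, hT₁S, hT₁⟩ : ∃ T : Finset V, (T : Set V) ⊆ S ∧ G.IsNClique 3 T := by
    refine exists_isNClique_of_not_cliqueFreeOn fun hG3 ↦ ?_
    have := hH.card_le_eight_of_cliqueFreeOn_three h hG3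
    omega
  have hT₁S : T₁ ⊆ S := mod_cast hT₁S
  set W := S \ T₁
  have hWS : W ⊆ S := sdiff_subset
  have hW : (G ⊔ H).IsClique W := h.subset (mod_cast hWS)
  have hT₁W : H.IsCompleteBetween T₁ W := hG.isCompleteBetween_sdiff h hT₁ hT₁S
  have hW3 : H.CliqueFreeOn W 3 :=
    H2FreeOn.cliqueFreeOn_three_of_isCompleteBetween hT₁W.symm
      (one_lt_card_iff_nontrivial.1 (by rw [hT₁.card_eq]; omega))
      (hH.subset (Set.union_subset (mod_cast hWS) (mod_cast hT₁S)))
  have hWcard : #W + 3 = #S := hT₁.card_eq ▸ card_sdiff_add_card_eq_card hT₁S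
  obtain ⟨T₂, hT₂W, hT₂⟩ : ∃ T : Finset V, (T : Set V) ⊆ W ∧ G.IsNClique 3 T := by
    refine exists_isNClique_of_not_cliqueFreeOn fun hG3 ↦ ?_
    have := card_le_five_of_cliqueFreeOn_three hW hG3 hW3
    omega
  have hT₂W : T₂ ⊆ W := mod_cast hT₂W
  set U := W \ T₂
  have hUW : U ⊆ W := sdiff_subset
  have hT₂U : H.IsCompleteBetween T₂ U :=
    (hG.subset (mod_cast hWS)).isCompleteBetween_sdiff hW hT₂ hT₂W
  have hU2 : H.CliqueFreeOn U 2 :=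
    cliqueFreeOn_of_isCompleteBetween hT₂U.symm (card_pos.1 (by rw [hT₂.card_eq]; omega))
      (hW3.subset H (Set.union_subset (mod_cast hUW) (mod_cast hT₂W)))
  have hU : G.IsClique U :=
    isClique_right_of_isClique_sup (sup_comm G H ▸ hW.subset (mod_cast hUW)) hU2
  have hUcard : #U + 3 = #W := hT₂.card_eq ▸ card_sdiff_add_card_eq_card hT₂W
  have hU3 : #U ≤ 3 := (hG.subset (mod_cast hUW.trans hWS)).card_le_three_of_isClique hU
  exact ⟨by omega, T₁, hT₁S, T₂, hT₂W.trans hWS, U, hUW.trans hWS, hT₁, hT₂, ⟨hU, by omega⟩,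
    fun x hx y hy ↦ hT₁W hx (hT₂W hy), fun x hx y hy ↦ hT₁W hx (hUW hy), hT₂U⟩

theorem H2FreeOn.two_le_card_adj {T : Finset V} {w : V} (h : (G ⊔ H).IsClique S)
    (hG : H2FreeOn G S) (hT : G.IsNClique 3 T) (hTS : T ⊆ S) (hv : v ∈ S)
    (hvT : ∀ x ∈ T, G.Adj v x) (hw : w ∈ S) (hvw : v ≠ w) (hvw' : ¬ G.Adj v w) :
    2 ≤ #{x ∈ T | H.Adj w x} := by
  have hwT : w ∉ insert v T := by
    rw [mem_insert, not_or]
    exact ⟨hvw.symm, fun hwT ↦ hvw' (hvT w hwT)⟩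
  have h3 : 3 ≤ #{x ∈ insert v T | H.Adj w x} :=
    hG.three_le_card_adj (sup_comm G H ▸ h) (hT.insert hvT) (insert_subset hv hTS) hw hwT
  rw [filter_insert, if_pos ((h hv hw hvw).resolve_left hvw').symm] at h3
  have := card_insert_le v {x ∈ T | H.Adj w x}
  omega

theorem H2FreeOn.card_adj_le_eight (h : (G ⊔ H).IsClique S) (hG : H2FreeOn G S)
    (hH : H2FreeOn H S) (hS : 10 < #S) (hv : v ∈ S) : #{w ∈ S | G.Adj v w} ≤ 8 := by
  by_contra! hN
  set N := {w ∈ S | G.Adj v w} with hNdef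
  have hNS : N ⊆ S := filter_subset _ _
  have hGN : PawFreeOn G N := by
    rw [hNdef, coe_filter_adj]
    exact hG v hv
  obtain ⟨hN9, T₁, hT₁, T₂, hT₂, T₃, hT₃, hT₁', hT₂', hT₃', h₁₂, h₁₃, h₂₃⟩ :=
    hGN.exists_three_isNClique (h.subset (mod_cast hNS)) (hH.subset (mod_cast hNS)) hN
  obtain ⟨w, hw, hwN⟩ : ∃ w ∈ S, w ∉ insert v N := by
    refine exists_mem_notMem_of_card_lt_card ((card_insert_le v N).trans_lt ?_)
    omega
  obtain ⟨hwv, hvw⟩ : w ≠ v ∧ ¬ G.Adj v w := by simpa [hNdef, hw] using hwN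
  have htwo {T : Finset V} (hT : T ⊆ N) (hT' : G.IsNClique 3 T) : 2 ≤ #{x ∈ T | H.Adj w x} :=
    hG.two_le_card_adj h hT' (hT.trans hNS) hv (fun x hx ↦ (mem_filter.1 (hT hx)).2) hw hwv.symm hvw
  obtain ⟨p, hp, p', hp', hpp'⟩ := one_lt_card.1 (htwo hT₁ hT₁')
  obtain ⟨q, hq⟩ := card_pos.1 (two_pos.trans_le (htwo hT₂ hT₂'))
  obtain ⟨r, hr⟩ := card_pos.1 (two_pos.trans_le (htwo hT₃ hT₃'))
  simp only [mem_filter] at hp hp' hq hr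
  have hmem {T : Finset V} (hT : T ⊆ N) {x : V} (hx : x ∈ T) : x ∈ (S : Set V) := hNS (hT hx)
  obtain rfl | rfl := hH q (hmem hT₂ hq.1) ⟨hmem hT₃ hr.1, h₂₃ hq.1 hr.1⟩ ⟨hw, hq.2.symm⟩
    ⟨hmem hT₁ hp.1, (h₁₂ hp.1 hq.1).symm⟩ ⟨hmem hT₁ hp'.1, (h₁₂ hp'.1 hq.1).symm⟩
    hr.2.symm (h₁₃ hp.1 hr.1).symm hp.2 (h₁₃ hp'.1 hr.1).symm
  · exact H.irrefl hp'.2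
  · exact hpp' rfl

theorem H2FreeOn.card_le_seventeen (h : (G ⊔ H).IsClique S) (hG : H2FreeOn G S)
    (hH : H2FreeOn H S) : #S ≤ 17 := by
  by_contra! hS
  obtain ⟨v, hv⟩ : S.Nonempty := card_pos.1 (by omega)
  have := card_le_card_adj_add_card_adj h hv
  have := hG.card_adj_le_eight h hH (by omega) hv
  have := hH.card_adj_le_eight (sup_comm G H ▸ h) hG (by omega) hv
  omega

end TwoColorRamsey

section Gallai

universe u

variable {V : Type u} {W κ : Type*}

/-- A Gallai coloring of the complete graph on `V`: an edge coloring without rainbow triangles.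
The colors `color x x` are junk. -/
structure GallaiColoring (V κ : Type*) where
  color : V → V → κ
  symm : ∀ x y, color x y = color y x
  gallai : ∀ ⦃x y z⦄, x ≠ y → x ≠ z → y ≠ z →
    color x y = color x z ∨ color x y = color y z ∨ color x z = color y z

namespace GallaiColoring

/-- The graph formed by the edges of color `i`. -/
def colorGraph (C : GallaiColoring V κ) (i : κ) : SimpleGraph V where
  Adj x y := x ≠ y ∧ C.color x y = i
  symm := ⟨fun x y h ↦ ⟨h.1.symm, C.symm x y ▸ h.2⟩⟩
  loopless := ⟨fun _ h ↦ h.1 rfl⟩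

/-- The coloring of `W` induced by an embedding into a colored complete graph. -/
def comap (C : GallaiColoring V κ) (f : W ↪ V) : GallaiColoring W κ where
  color x y := C.color (f x) (f y)
  symm _ _ := C.symm _ _
  gallai _ _ _ hxy hxz hyz :=
    C.gallai (f.injective.ne hxy) (f.injective.ne hxz) (f.injective.ne hyz)

/-- `C` arises from `D` by substituting, for every vertex `w`, a colored complete graph on the
fiber `f ⁻¹' {w}`. -/
structure IsBlowup (C : GallaiColoring V κ) (D : GallaiColoring W κ) (f : V → W) : Prop where
  surjective : Function.Surjective f
  color_eq : ∀ ⦃x y⦄, f x ≠ f y → C.color x y = D.color (f x) (f y)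

variable {C : GallaiColoring V κ} {i j l : κ} {x y z : V}

theorem colorGraph_comap (f : W ↪ V) :
    (C.comap f).colorGraph i = (C.colorGraph i).comap f := by
  ext x y
  simp [colorGraph, comap]

theorem colorGraph_adj_color (hxy : x ≠ y) : (C.colorGraph (C.color x y)).Adj x y :=
  ⟨hxy, rfl⟩

theorem color_eq_of_reachable (hxy : (C.colorGraph i).Reachable x y)
    (hxz : ¬ (C.colorGraph i).Reachable x z) : C.color x z = C.color y z := by
  obtain ⟨p⟩ := hxy
  induction p with
  | nil => rfl
  | @cons x x' y hadj _ ih =>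
    have hx'z : ¬ (C.colorGraph i).Reachable x' z := fun h ↦ hxz (hadj.reachable.trans h)
    have hne : x ≠ z := fun h ↦ hxz (h ▸ .refl x)
    have hne' : x' ≠ z := fun h ↦ hx'z (h ▸ .refl x')
    rw [← ih hx'z]
    obtain h | h | h := C.gallai hadj.1 hne hne'
    · exact absurd (Adj.reachable (G := C.colorGraph i) ⟨hne, h ▸ hadj.2⟩) hxz
    · exact absurd (Adj.reachable (G := C.colorGraph i) ⟨hne', h ▸ hadj.2⟩) hx'z
    · exact h

theorem exists_reachable_induce_adj {G : SimpleGraph V} (hG : G.Preconnected) {v : V}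
    (x : ({v}ᶜ : Set V)) : ∃ y : ({v}ᶜ : Set V), (G.induce {v}ᶜ).Reachable x y ∧ G.Adj y v := by
  let S : Set V := {y | ∃ hy : y ∈ ({v}ᶜ : Set V), (G.induce {v}ᶜ).Reachable x ⟨y, hy⟩}
  obtain ⟨p⟩ := hG x v
  obtain ⟨d, -, ⟨hd, hreach⟩, hd'⟩ :=
    p.exists_boundary_dart S ⟨x.2, .refl _⟩ fun h ↦ h.1 rfl
  have hsnd : d.snd = v := by
    by_contra hne
    exact hd' ⟨hne, hreach.trans (Adj.reachable (G := G.induce {v}ᶜ) d.adj)⟩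
  exact ⟨⟨d.fst, hd⟩, hreach, hsnd ▸ d.adj⟩

theorem color_eq_of_not_reachable_induce {v : V} (hi : (C.colorGraph i).Preconnected)
    {x y : ({v}ᶜ : Set V)} (hx : C.color v x ≠ i)
    (hxy : ¬ ((C.colorGraph i).induce {v}ᶜ).Reachable x y) : C.color x y = C.color v x := by
  obtain ⟨y', hyy', hy'⟩ := exists_reachable_induce_adj hi y
  have hxy' : ¬ ((C.colorGraph i).induce {v}ᶜ).Reachable x y' :=
    fun h ↦ hxy (h.trans hyy'.symm)
  have hne : (x : V) ≠ y' := fun h ↦ hxy' (Subtype.ext h ▸ .refl x)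
  have hy : C.color y x = C.color y' x :=
    color_eq_of_reachable (C := C.comap (.subtype _)) (by rwa [colorGraph_comap])
      (by rw [colorGraph_comap]; exact fun h ↦ hxy h.symm)
  rw [C.symm x y, hy, C.symm y' x]
  obtain h | h | h := C.gallai (Ne.symm x.2) (Ne.symm y'.2) hne
  · exact absurd (h.trans ((C.symm _ _).trans hy'.2)) hx
  · exact h.symm
  · exact absurd (Adj.reachable (G := (C.colorGraph i).induce {v}ᶜ)
      ⟨hne, h.symm.trans ((C.symm _ _).trans hy'.2)⟩) hxy'

theorem preconnected_induce_of_adj {v : V} (hi : (C.colorGraph i).Preconnected)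
    (hij : i ≠ j) (hil : i ≠ l) (hjl : j ≠ l) (hx : (C.colorGraph j).Adj v x)
    (hy : (C.colorGraph l).Adj v y) : ((C.colorGraph i).induce {v}ᶜ).Preconnected := by
  by_contra hdisc
  lift x to ({v}ᶜ : Set V) using hx.1.symm
  lift y to ({v}ᶜ : Set V) using hy.1.symm
  have hxj {z : ({v}ᶜ : Set V)} (h : ¬ ((C.colorGraph i).induce {v}ᶜ).Reachable x z) :
      C.color x z = j :=
    (color_eq_of_not_reachable_induce hi (hx.2 ▸ hij.symm) h).trans hx.2
  have hyl {z : ({v}ᶜ : Set V)} (h : ¬ ((C.colorGraph i).induce {v}ᶜ).Reachable y z) :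
      C.color y z = l :=
    (color_eq_of_not_reachable_induce hi (hy.2 ▸ hil.symm) h).trans hy.2
  by_cases hxy : ((C.colorGraph i).induce {v}ᶜ).Reachable x y
  · obtain ⟨z, hxz⟩ : ∃ z, ¬ ((C.colorGraph i).induce {v}ᶜ).Reachable x z := by
      by_contra! h
      exact hdisc fun a b ↦ (h a).symm.trans (h b)
    have hmodule : C.color x z = C.color y z :=
      color_eq_of_reachable (C := C.comap (.subtype _)) (by rwa [colorGraph_comap])
        (by rwa [colorGraph_comap])
    exact hjl ((hxj hxz).symm.trans (hmodule.trans (hyl fun h ↦ hxz (hxy.trans h))))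
  · exact hjl ((hxj hxy).symm.trans ((C.symm _ _).trans (hyl fun h ↦ hxy h.symm)))

/-- If three colors connect `V`, then each of them still connects `V` minus any vertex. -/
theorem not_three_preconnected [Finite V] [Nontrivial V] (C : GallaiColoring V κ)
    (hij : i ≠ j) (hil : i ≠ l) (hjl : j ≠ l) (hi : (C.colorGraph i).Preconnected)
    (hj : (C.colorGraph j).Preconnected) : ¬ (C.colorGraph l).Preconnected := by
  intro hl
  induction hn : Nat.card V using Nat.strong_induction_on generalizing V with | _ n ih
  obtain ⟨v⟩ : Nonempty V := inferInstance
  obtain ⟨x, hx⟩ := hi.exists_adj_of_nontrivial v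
  obtain ⟨y, hy⟩ := hj.exists_adj_of_nontrivial v
  obtain ⟨z, hz⟩ := hl.exists_adj_of_nontrivial v
  have hxy : x ≠ y := fun h ↦ hij (hx.2.symm.trans (h ▸ hy.2))
  have : Nontrivial ({v}ᶜ : Set V) :=
    ⟨⟨x, hx.1.symm⟩, ⟨y, hy.1.symm⟩, fun h ↦ hxy (Subtype.ext_iff.1 h)⟩
  have hcard : Nat.card ({v}ᶜ : Set V) < n := hn ▸ Finite.card_subtype_lt (x := v) (by simp)
  refine ih _ hcard (C.comap (.subtype _)) ?_ ?_ ?_ rfl <;> rw [colorGraph_comap]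
  · exact preconnected_induce_of_adj hi hij hil hjl hy hz
  · exact preconnected_induce_of_adj hj hij.symm hjl hil hx hz
  · exact preconnected_induce_of_adj hl hil.symm hjl.symm hij hx hy

/-- The coloring obtained by collapsing the components of the graph of color `i`. -/
noncomputable def quotient (C : GallaiColoring V κ) (i : κ) :
    GallaiColoring (C.colorGraph i).ConnectedComponent κ :=
  C.comap ⟨Quot.out, fun x y h ↦
    (Quot.out_eq x).symm.trans ((congrArg (Quot.mk _) h).trans (Quot.out_eq y))⟩

theorem isBlowup_quotient : IsBlowup C (C.quotient i) (C.colorGraph i).connectedComponentMk where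
  surjective := Quot.mk_surjective
  color_eq x y hxy := by
    have hout (z : V) : (C.colorGraph i).Reachable z
        (Quot.out ((C.colorGraph i).connectedComponentMk z)) :=
      ConnectedComponent.exact (Quot.out_eq _).symm
    have hxy' : ¬ (C.colorGraph i).Reachable x y := fun h ↦ hxy (ConnectedComponent.sound h)
    rw [color_eq_of_reachable (hout x) hxy', C.symm,
      color_eq_of_reachable (hout y) fun h ↦ hxy' ((hout x).trans h.symm), C.symm]
    rfl

theorem IsBlowup.comp {X : Type*} {D : GallaiColoring W κ} {E : GallaiColoring X κ} {f : V → W}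
    {g : W → X} (hf : IsBlowup C D f) (hg : IsBlowup D E g) : IsBlowup C E (g ∘ f) where
  surjective := hg.surjective.comp hf.surjective
  color_eq _ _ hxy := (hf.color_eq fun h ↦ hxy (congrArg g h)).trans (hg.color_eq hxy)

theorem IsBlowup.adj_iff {D : GallaiColoring W κ} {f : V → W} (hf : IsBlowup C D f)
    (hxy : f x ≠ f y) : (C.colorGraph i).Adj x y ↔ (D.colorGraph i).Adj (f x) (f y) := by
  simp [colorGraph, hxy, ne_of_apply_ne f hxy, hf.color_eq hxy]

/-- `C` is a nontrivial join: the vertices are split into two parts with all edges between them of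
the same color `i`. -/
def IsJoin (C : GallaiColoring V κ) : Prop :=
  ∃ i, ∃ s : Set V, s.Nonempty ∧ sᶜ.Nonempty ∧ (C.colorGraph i).IsCompleteBetween s sᶜ

theorem IsBlowup.isJoin {D : GallaiColoring W κ} {f : V → W} (hf : IsBlowup C D f)
    (hD : D.IsJoin) : C.IsJoin := by
  obtain ⟨i, s, hs, hs', hjoin⟩ := hD
  refine ⟨i, f ⁻¹' s, hs.preimage hf.surjective, hs'.preimage hf.surjective, fun x hx y hy ↦ ?_⟩
  have hadj := hjoin hx hy
  exact (hf.adj_iff hadj.1).2 hadj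

/-- `C` is colored with two connected colors `i ≠ j`. -/
structure IsTwoColored (C : GallaiColoring V κ) (i j : κ) : Prop where
  ne : i ≠ j
  sup_eq_top : C.colorGraph i ⊔ C.colorGraph j = ⊤
  left : (C.colorGraph i).Preconnected
  right : (C.colorGraph j).Preconnected

theorem IsTwoColored.symm (h : C.IsTwoColored i j) : C.IsTwoColored j i :=
  ⟨h.ne.symm, by rw [sup_comm, h.sup_eq_top], h.right, h.left⟩

theorem isJoin_or_isTwoColored [Finite V] [Nontrivial V]
    (hC : ∀ i, C.colorGraph i ≠ ⊥ → (C.colorGraph i).Preconnected) :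
    C.IsJoin ∨ ∃ i j, C.IsTwoColored i j := by
  have hused {x y : V} (hxy : x ≠ y) : (C.colorGraph (C.color x y)).Preconnected :=
    hC _ (ne_bot_iff_exists_adj.2 ⟨x, y, colorGraph_adj_color hxy⟩)
  obtain ⟨v, w, hvw⟩ := exists_pair_ne V
  by_cases hone : ∃ x y, x ≠ y ∧ C.color x y ≠ C.color v w
  · obtain ⟨x, y, hxy, hne⟩ := hone
    refine Or.inr ⟨_, _, hne.symm, top_unique fun a b hab ↦ ?_, hused hvw, hused hxy⟩
    by_contra hthird
    simp only [sup_adj, colorGraph, hab.ne, ne_eq, not_false_eq_true, true_and, not_or] at hthird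
    exact not_three_preconnected C hne.symm (Ne.symm hthird.1) (Ne.symm hthird.2) (hused hvw)
      (hused hxy) (hused hab.ne)
  · push Not at hone
    exact Or.inl ⟨C.color v w, {v}, ⟨v, rfl⟩, ⟨w, hvw.symm⟩,
      fun x hx y hy ↦ ⟨ne_of_mem_of_not_mem hx hy, hone x y (ne_of_mem_of_not_mem hx hy)⟩⟩

/-- Gallai's structure theorem: collapse the components of a disconnected color until every
color in use is connected; at most two colors are then left. -/
theorem isJoin_or_exists_isBlowup [Finite V] [Nontrivial V] (C : GallaiColoring V κ) :
    C.IsJoin ∨ ∃ (W : Type u) (_ : Nontrivial W) (D : GallaiColoring W κ) (f : V → W) (i j : κ),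
      IsBlowup C D f ∧ D.IsTwoColored i j := by
  induction hn : Nat.card V using Nat.strong_induction_on generalizing V with | _ n ih
  by_cases hC : ∀ i, C.colorGraph i ≠ ⊥ → (C.colorGraph i).Preconnected
  · refine (isJoin_or_isTwoColored hC).imp_right fun ⟨i, j, h⟩ ↦ ?_
    exact ⟨V, ‹_›, C, id, i, j, ⟨Function.surjective_id, fun _ _ _ ↦ rfl⟩, h⟩
  push Not at hC
  obtain ⟨i, hused, hdisc⟩ := hC
  have hmk := (isBlowup_quotient (C := C) (i := i))
  have : Nontrivial (C.colorGraph i).ConnectedComponent := by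
    rw [← not_subsingleton_iff_nontrivial]
    exact fun _ ↦ hdisc fun x y ↦ ConnectedComponent.exact (Subsingleton.elim _ _)
  have hcard : Nat.card (C.colorGraph i).ConnectedComponent < n := by
    obtain ⟨x, y, hxy⟩ := ne_bot_iff_exists_adj.1 hused
    refine hn ▸ lt_of_not_ge fun hle ↦ hxy.1 ?_
    exact (Function.Surjective.bijective_of_nat_card_le hmk.surjective hle).injective
      (ConnectedComponent.sound hxy.reachable)
  obtain hjoin | ⟨W, hW, D, f, a, b, hf, hD⟩ := ih _ hcard (C.quotient i) rfl
  · exact Or.inl (hmk.isJoin hjoin)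
  · exact Or.inr ⟨W, hW, D, _, a, b, hmk.comp hf, hD⟩

end GallaiColoring

end Gallai

section Weight

/-- The graphs that may be forbidden in a color during the induction; `edge` forbids the color
altogether. -/
inductive Pattern
  | edge
  | triangle
  | paw
  | H2

/-- `p.FreeOn G s` says that `G` has no copy of the pattern `p` inside `s`. -/
def Pattern.FreeOn {V : Type*} : Pattern → SimpleGraph V → Set V → Prop
  | .edge, G, s => G.CliqueFreeOn s 2
  | .triangle, G, s => G.CliqueFreeOn s 3
  | .paw, G, s => PawFreeOn G s
  | .H2, G, s => H2FreeOn G s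

theorem Pattern.FreeOn.subset {V : Type*} {G : SimpleGraph V} {s t : Set V} {p : Pattern}
    (hst : s ⊆ t) (h : p.FreeOn G t) : p.FreeOn G s :=
  match p with
  | .edge | .triangle => CliqueFreeOn.subset G hst h
  | .paw => PawFreeOn.subset hst h
  | .H2 => H2FreeOn.subset hst h

theorem Pattern.FreeOn.induce {V : Type*} {G : SimpleGraph V} {s : Set V} {p : Pattern}
    (h : p.FreeOn G s) : p.FreeOn (G.induce s) Set.univ :=
  match p with
  | .edge | .triangle => (cliqueFreeOn_univ _).2 ((cliqueFree_induce_iff G _ _).2 h)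
  | .paw => fun x y z w _ _ _ _ hxy hxz hyz hxw ↦
    (h x.2 y.2 z.2 w.2 hxy hxz hyz hxw).imp Subtype.ext Subtype.ext
  | .H2 => fun v _ x y z w hx hy hz hw hxy hxz hyz hxw ↦
    (h v v.2 ⟨x.2, hx.2⟩ ⟨y.2, hy.2⟩ ⟨z.2, hz.2⟩ ⟨w.2, hw.2⟩ hxy hxz hyz hxw).imp
      Subtype.ext Subtype.ext

/-- The product `a * (b / a) * a * (b / a) * ⋯` of `n` alternating factors. -/
def alternatingPow (a b n : ℕ) : ℕ := a ^ (n % 2) * b ^ (n / 2)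

section AlternatingPow

variable {a b : ℕ} (n : ℕ)

theorem alternatingPow_add_two : alternatingPow a b (n + 2) = b * alternatingPow a b n := by
  simp only [alternatingPow, Nat.add_mod_right, Nat.add_div_right n two_pos, pow_succ]
  ring

theorem alternatingPow_add_one_of_even (hn : Even n) :
    alternatingPow a b (n + 1) = a * alternatingPow a b n := by
  obtain ⟨m, rfl⟩ := hn
  simp [alternatingPow, show (m + m + 1) % 2 = 1 by omega, show (m + m + 1) / 2 = m by omega,
    show (m + m) % 2 = 0 by omega, show (m + m) / 2 = m by omega]

theorem alternatingPow_pos (ha : 0 < a) (hb : 0 < b) : 0 < alternatingPow a b n := by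
  unfold alternatingPow
  positivity

theorem mul_alternatingPow_le (hab : a * a ≤ b) :
    a * alternatingPow a b n ≤ alternatingPow a b (n + 1) := by
  obtain hn | hn := Nat.even_or_odd n
  · exact (alternatingPow_add_one_of_even n hn).ge
  · obtain ⟨m, rfl⟩ := hn.exists_bit1
    rw [alternatingPow_add_one_of_even _ (even_two_mul m), alternatingPow_add_two, ← mul_assoc]
    exact Nat.mul_le_mul_right _ hab

theorem mul_alternatingPow_add_one_le (hab : a * a ≤ b) :
    a * alternatingPow a b (n + 1) ≤ b * alternatingPow a b n :=
  alternatingPow_add_two (a := a) n ▸ mul_alternatingPow_le (n + 1) hab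

end AlternatingPow

variable {κ : Type*} [Fintype κ] {t : κ → Pattern} {i j : κ} {p q : Pattern}

/-- The bound on the number of vertices of a Gallai coloring which avoids the pattern `t i` in each
color `i`. -/
noncomputable def weight (t : κ → Pattern) : ℕ :=
  3 ^ #{i | t i = .paw} * alternatingPow 2 5 #{i | t i = .triangle} *
    alternatingPow 4 17 #{i | t i = .H2}

theorem weight_pos : 0 < weight t := by
  have := alternatingPow_pos #{i | t i = .triangle} two_pos (Nat.succ_pos 4)
  have := alternatingPow_pos #{i | t i = .H2} four_pos (Nat.succ_pos 16)
  unfold weight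
  positivity

theorem card_update_eq (hq : q ≠ .edge) :
    #{l | Function.update t i p l = q} =
      #{l | Function.update t i .edge l = q} + if p = q then 1 else 0 := by
  have hrest : ∀ l ∈ univ.erase i, (if Function.update t i p l = q then 1 else 0) =
      if Function.update t i .edge l = q then 1 else 0 := fun l hl ↦ by
    simp only [Function.update_of_ne (ne_of_mem_erase hl)]
  rw [card_filter, card_filter, ← add_sum_erase univ _ (mem_univ i),
    ← add_sum_erase univ _ (mem_univ i), sum_congr rfl hrest, Function.update_self,
    Function.update_self, if_neg hq.symm, zero_add, add_comm]

theorem weight_update : weight (Function.update t i p) =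
    3 ^ (#{l | Function.update t i .edge l = .paw} + if p = .paw then 1 else 0) *
      alternatingPow 2 5
        (#{l | Function.update t i .edge l = .triangle} + if p = .triangle then 1 else 0) *
      alternatingPow 4 17
        (#{l | Function.update t i .edge l = .H2} + if p = .H2 then 1 else 0) := by
  rw [weight, card_update_eq (p := p), card_update_eq (p := p), card_update_eq (p := p)]
    <;> exact Pattern.noConfusion

theorem weight_update_paw :
    weight (Function.update t i .paw) = 3 * weight (Function.update t i .edge) := by
  simp only [weight_update, reduceCtorEq, if_true, if_false, add_zero, pow_succ]
  ring

theorem two_mul_weight_update_edge_le :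
    2 * weight (Function.update t i .edge) ≤ weight (Function.update t i .triangle) := by
  simp only [weight_update, reduceCtorEq, if_true, if_false, add_zero]
  rw [mul_assoc, mul_assoc, mul_left_comm, ← mul_assoc 2]
  gcongr
  exact mul_alternatingPow_le _ (by norm_num)

theorem two_mul_weight_update_triangle_le :
    2 * weight (Function.update t i .triangle) ≤ 5 * weight (Function.update t i .edge) := by
  simp only [weight_update, reduceCtorEq, if_true, if_false, add_zero]
  rw [mul_assoc, mul_assoc, mul_left_comm, mul_left_comm 5, ← mul_assoc 2, ← mul_assoc 5]
  exact Nat.mul_le_mul_left _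
    (Nat.mul_le_mul_right _ (mul_alternatingPow_add_one_le _ (by norm_num)))

theorem four_mul_weight_update_edge_le :
    4 * weight (Function.update t i .edge) ≤ weight (Function.update t i .H2) := by
  simp only [weight_update, reduceCtorEq, if_true, if_false, add_zero]
  rw [mul_left_comm]
  gcongr
  exact mul_alternatingPow_le _ (by norm_num)

theorem four_mul_weight_update_H2_le :
    4 * weight (Function.update t i .H2) ≤ 17 * weight (Function.update t i .edge) := by
  simp only [weight_update, reduceCtorEq, if_true, if_false, add_zero]
  rw [mul_left_comm, mul_left_comm 17]
  exact Nat.mul_le_mul_left _ (mul_alternatingPow_add_one_le _ (by norm_num))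

theorem weight_comp_equiv (e : κ ≃ κ) : weight (t ∘ e) = weight t := by
  have hcard (q : Pattern) : #{l | (t ∘ e) l = q} = #{l | t l = q} :=
    card_equiv e (by simp)
  simp only [weight, hcard]

theorem weight_update_swap (hij : i ≠ j) :
    weight (Function.update (Function.update t i p) j q) =
      weight (Function.update (Function.update t i q) j p) := by
  rw [← weight_comp_equiv (Equiv.swap i j)]
  congr 1
  ext l
  obtain rfl | hi := eq_or_ne l i
  · simp [hij]
  obtain rfl | hj := eq_or_ne l j
  · simp [hij]
  simp [Equiv.swap_apply_of_ne_of_ne hi hj, hi, hj]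

theorem card_update_update_eq (hij : i ≠ j) (hq : q ≠ .edge) :
    #{l | Function.update (Function.update t i p) j p l = q} =
      #{l | Function.update (Function.update t i .edge) j .edge l = q} +
        if p = q then 2 else 0 := by
  rw [card_update_eq hq, Function.update_comm hij, card_update_eq hq, Function.update_comm hij.symm]
  split_ifs <;> rfl

theorem weight_update_triangle_triangle (hij : i ≠ j) :
    weight (Function.update (Function.update t i .triangle) j .triangle) =
      5 * weight (Function.update (Function.update t i .edge) j .edge) := by
  simp only [weight, card_update_update_eq (p := .triangle) hij, ne_eq, reduceCtorEq,
    not_false_eq_true, if_true, if_false, add_zero, alternatingPow_add_two]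
  ring

theorem weight_update_H2_H2 (hij : i ≠ j) :
    weight (Function.update (Function.update t i .H2) j .H2) =
      17 * weight (Function.update (Function.update t i .edge) j .edge) := by
  simp only [weight, card_update_update_eq (p := .H2) hij, ne_eq, reduceCtorEq,
    not_false_eq_true, if_true, if_false, add_zero, alternatingPow_add_two]
  ring

theorem eight_mul_weight_update_H2_triangle_le (hij : i ≠ j) :
    8 * weight (Function.update (Function.update t i .H2) j .triangle) ≤
      85 * weight (Function.update (Function.update t i .edge) j .edge) := by
  have hi := four_mul_weight_update_H2_le (t := Function.update t j .triangle) (i := i)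
  have hj := two_mul_weight_update_triangle_le (t := Function.update t i .edge) (i := j)
  rw [Function.update_comm hij.symm, Function.update_comm hij.symm] at hi
  omega

theorem weight_triangle_triangle (hij : i ≠ j) (hi : t i = .triangle) (hj : t j = .triangle) :
    weight t = 5 * weight (Function.update (Function.update t i .edge) j .edge) := by
  rw [← weight_update_triangle_triangle hij, ← hi, Function.update_eq_self, hi, ← hj,
    Function.update_eq_self]

theorem weight_H2_H2 (hij : i ≠ j) (hi : t i = .H2) (hj : t j = .H2) :
    weight t = 17 * weight (Function.update (Function.update t i .edge) j .edge) := by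
  rw [← weight_update_H2_H2 hij, ← hi, Function.update_eq_self, hi, ← hj,
    Function.update_eq_self]

theorem four_mul_weight_update_triangle_edge_le (hij : i ≠ j) (hi : t i = .triangle)
    (hj : t j = .H2) :
    4 * weight (Function.update (Function.update t i .edge) j .triangle) ≤ weight t := by
  have := four_mul_weight_update_edge_le (t := t) (i := j)
  rw [weight_update_swap hij, ← hi, Function.update_eq_self]
  rwa [← hj, Function.update_eq_self] at this

end Weight

section UpperBound

universe u

namespace GallaiColoring

variable {V : Type u} {W κ : Type*} {C : GallaiColoring V κ} {D : GallaiColoring W κ} {f : V → W}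
  {t : κ → Pattern} {i j : κ} {s : Set V} {p : Pattern}

/-- `C` avoids the pattern `t i` in each color `i` on the vertex set `s`. -/
def Avoids (C : GallaiColoring V κ) (t : κ → Pattern) (s : Set V) : Prop :=
  ∀ i, (t i).FreeOn (C.colorGraph i) s

theorem Avoids.subset {s' : Set V} (hs : s ⊆ s') (h : C.Avoids t s') : C.Avoids t s :=
  fun i ↦ (h i).subset hs

theorem Avoids.freeOn (h : C.Avoids t s) (hi : t i = p) : p.FreeOn (C.colorGraph i) s :=
  hi ▸ h i

theorem Avoids.update (h : C.Avoids t s) (hp : p.FreeOn (C.colorGraph i) s) :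
    C.Avoids (Function.update t i p) s := by
  intro l
  obtain rfl | hl := eq_or_ne l i
  · rwa [Function.update_self]
  · rw [Function.update_of_ne hl]
    exact h l

section Fintype

variable [Fintype V] [Fintype κ]

/-- The induction hypothesis of the upper bound: it holds on all proper subsets of `V`. -/
def BoundOnProper (C : GallaiColoring V κ) : Prop :=
  ∀ ⦃S : Finset V⦄ ⦃t : κ → Pattern⦄, S ≠ univ → C.Avoids t S → #S ≤ weight t

theorem Avoids.card_le_weight_of_paw (h : C.Avoids t Set.univ) (hi : t i = .paw)
    (hconn : (C.colorGraph i).Preconnected)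
    (htri : C.Avoids (Function.update t i .triangle) Set.univ →
      Fintype.card V ≤ weight (Function.update t i .triangle)) :
    Fintype.card V ≤ weight t := by
  have hpaw : weight t = 3 * weight (Function.update t i .edge) := by
    rw [← weight_update_paw, ← hi, Function.update_eq_self]
  have hpos : 0 < weight (Function.update t i .edge) := weight_pos
  obtain hfree | hcard := PawFreeOn.cliqueFreeOn_three_or_card_le (h.freeOn hi) hconn
  · have := htri (h.update hfree)
    have := two_mul_weight_update_triangle_le (t := t) (i := i)
    omega
  · omega

section Join

variable {A B : Finset V}

theorem ne_univ_of_isCompleteBetween {G : SimpleGraph V} (hAB : G.IsCompleteBetween A B)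
    (hB : B.Nonempty) : A ≠ univ := by
  rintro rfl
  obtain ⟨b, hb⟩ := hB
  exact G.irrefl (hAB (mem_univ b) hb)

theorem BoundOnProper.card_add_card_le_of_cliqueFreeOn_two (hC : C.BoundOnProper)
    (hAB : (C.colorGraph j).IsCompleteBetween A B) (hA : A.Nonempty) (hB : B.Nonempty)
    (h : C.Avoids t (A ∪ B)) (hj : t j = .H2) (hAedge : (C.colorGraph j).CliqueFreeOn A 2) :
    #A + #B ≤ 3 * weight (Function.update t j .edge) +
      max 1 (weight (Function.update t j .edge) / 2) := by
  have hH2 : H2FreeOn (C.colorGraph j) (B ∪ A) := Set.union_comm _ _ ▸ h.freeOn hj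
  have hboundA := hC (ne_univ_of_isCompleteBetween hAB hB)
    ((h.subset Set.subset_union_left).update (i := j) (p := .edge) hAedge)
  have hBproper := ne_univ_of_isCompleteBetween hAB.symm hA
  have hBavoids := h.subset Set.subset_union_right
  obtain hA1 | hA1 := lt_or_ge 1 #A
  · have htri := hC hBproper (hBavoids.update (i := j) (p := .triangle)
      (hH2.cliqueFreeOn_three_of_isCompleteBetween hAB.symm (one_lt_card_iff_nontrivial.1 hA1)))
    have := two_mul_weight_update_triangle_le (t := t) (i := j)
    omega
  · have hpaw := hC hBproper (hBavoids.update (i := j) (p := .paw)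
      (hH2.pawFreeOn_of_isCompleteBetween hAB.symm hA))
    rw [weight_update_paw] at hpaw
    omega

theorem BoundOnProper.card_add_card_le (hC : C.BoundOnProper)
    (hAB : (C.colorGraph j).IsCompleteBetween A B) (hA : A.Nonempty) (hB : B.Nonempty)
    (h : C.Avoids t (A ∪ B)) (hj : t j = .H2) :
    #A + #B ≤ 3 * weight (Function.update t j .edge) +
      max 1 (weight (Function.update t j .edge) / 2) := by
  by_cases hAedge : (C.colorGraph j).CliqueFreeOn A 2
  · exact hC.card_add_card_le_of_cliqueFreeOn_two hAB hA hB h hj hAedge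
  by_cases hBedge : (C.colorGraph j).CliqueFreeOn B 2
  · rw [add_comm]
    exact hC.card_add_card_le_of_cliqueFreeOn_two hAB.symm hB hA (Set.union_comm _ _ ▸ h) hj hBedge
  have hH2 : H2FreeOn (C.colorGraph j) (A ∪ B) := h.freeOn hj
  have hB2 : ¬ 3 ≤ #B :=
    fun hcard ↦ hAedge (hH2.cliqueFreeOn_two_of_isCompleteBetween hAB hBedge hcard)
  have hA2 : ¬ 3 ≤ #A := fun hcard ↦ hBedge
    ((Set.union_comm _ _ ▸ hH2).cliqueFreeOn_two_of_isCompleteBetween hAB.symm hAedge hcard)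
  have hpos : 0 < weight (Function.update t j .edge) := weight_pos
  omega

theorem BoundOnProper.card_add_card_le_of_triangle (hC : C.BoundOnProper)
    (hAB : (C.colorGraph j).IsCompleteBetween A B) (hA : A.Nonempty) (hB : B.Nonempty)
    (h : C.Avoids t (A ∪ B)) (hj : t j = .triangle) : #A + #B ≤ weight t := by
  have hfree : (C.colorGraph j).CliqueFreeOn (A ∪ B) 3 := h.freeOn hj
  have hboundA := hC (ne_univ_of_isCompleteBetween hAB hB)
    ((h.subset Set.subset_union_left).update (i := j) (p := .edge)
      (cliqueFreeOn_of_isCompleteBetween hAB hB hfree))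
  have hboundB := hC (ne_univ_of_isCompleteBetween hAB.symm hA)
    ((h.subset Set.subset_union_right).update (i := j) (p := .edge)
      (cliqueFreeOn_of_isCompleteBetween hAB.symm hA (Set.union_comm _ _ ▸ hfree)))
  have := two_mul_weight_update_edge_le (t := t) (i := j)
  rw [← hj, Function.update_eq_self] at this
  omega

end Join

theorem BoundOnProper.card_le_weight_of_isJoin (hC : C.BoundOnProper) (hjoin : C.IsJoin)
    (h : C.Avoids t Set.univ) : Fintype.card V ≤ weight t := by
  obtain ⟨i, s, hs, hs', hsi⟩ := hjoin
  obtain ⟨A, rfl⟩ : ∃ A : Finset V, (A : Set V) = s := ⟨s.toFinset, s.coe_toFinset⟩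
  rw [← coe_compl] at hs' hsi
  have huniv : (A ∪ (Aᶜ : Finset V) : Set V) = Set.univ := by simp
  rw [← card_add_card_compl A]
  have htriangle {t' : κ → Pattern} (h' : C.Avoids t' Set.univ) (hi : t' i = .triangle) :
      #A + #Aᶜ ≤ weight t' :=
    hC.card_add_card_le_of_triangle hsi hs hs' (huniv.symm ▸ h') hi
  cases hi : t i with
  | edge =>
    obtain ⟨⟨a, ha⟩, b, hb⟩ := hs, hs'
    exact absurd (h.freeOn hi) (not_cliqueFreeOn_two_of_adj (hsi ha hb) trivial trivial)
  | triangle => exact htriangle h hi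
  | paw =>
    rw [card_add_card_compl]
    exact h.card_le_weight_of_paw hi (preconnected_of_isCompleteBetween hsi hs hs' huniv)
      fun h' ↦ card_add_card_compl A ▸ htriangle h' (Function.update_self ..)
  | H2 =>
    have hbound := hC.card_add_card_le hsi hs hs' (huniv.symm ▸ h) hi
    have hpos : 0 < weight (Function.update t i .edge) := weight_pos
    have := four_mul_weight_update_edge_le (t := t) (i := i)
    rw [← hi, Function.update_eq_self] at this
    omega

end Fintype

section Blowup

theorem IsBlowup.preconnected [Nontrivial W] (hf : IsBlowup C D f)
    (hD : (D.colorGraph i).Preconnected) : (C.colorGraph i).Preconnected := by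
  have hadj {x y : V} (h : (D.colorGraph i).Adj (f x) (f y)) : (C.colorGraph i).Adj x y :=
    (hf.adj_iff h.1).2 h
  have hlift {u w : W} (p : (D.colorGraph i).Walk u w) :
      ∀ x, f x = u → ∃ z, f z = w ∧ (C.colorGraph i).Reachable x z := by
    induction p with
    | nil => exact fun x hx ↦ ⟨x, hx, .refl x⟩
    | @cons _ v _ h _ ih =>
      rintro x rfl
      obtain ⟨y, rfl⟩ := hf.surjective v
      obtain ⟨z, hz, hyz⟩ := ih y rfl
      exact ⟨z, hz, (hadj h).reachable.trans hyz⟩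
  intro x y
  obtain ⟨p⟩ := hD (f x) (f y)
  obtain ⟨z, hz, hxz⟩ := hlift p x rfl
  obtain ⟨w, hw⟩ := hD.exists_adj_of_nontrivial (f y)
  obtain ⟨y', rfl⟩ := hf.surjective w
  exact hxz.trans ((hadj (hz ▸ hw)).reachable.trans (hadj hw).symm.reachable)

theorem IsBlowup.sup_adj (hf : IsBlowup C D f) (hD : D.IsTwoColored i j) {x y : V}
    (hxy : f x ≠ f y) : (C.colorGraph i ⊔ C.colorGraph j).Adj x y := by
  rw [SimpleGraph.sup_adj, hf.adj_iff hxy, hf.adj_iff hxy, ← SimpleGraph.sup_adj, hD.sup_eq_top]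
  exact hxy

theorem IsBlowup.ne_edge [Nontrivial W] (hf : IsBlowup C D f) (hi : (D.colorGraph i).Preconnected)
    (h : C.Avoids t Set.univ) : t i ≠ .edge := by
  intro hedge
  obtain ⟨w⟩ : Nonempty W := inferInstance
  obtain ⟨w', hw⟩ := hi.exists_adj_of_nontrivial w
  obtain ⟨⟨x, rfl⟩, y, rfl⟩ := hf.surjective w, hf.surjective w'
  exact not_cliqueFreeOn_two_of_adj ((hf.adj_iff hw.1).2 hw) (Set.mem_univ x) (Set.mem_univ y)
    (h.freeOn hedge)

variable [Fintype V]

/-- The vertices which are substituted for the vertex `w` of `W`. -/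
noncomputable def fiber (f : V → W) (w : W) : Finset V := {x | f x = w}

/-- The vertices outside `fiber f w` which are joined to it in color `i`. -/
noncomputable def fiberNeighbors (D : GallaiColoring W κ) (f : V → W) (i : κ) (w : W) : Finset V :=
  {x | (D.colorGraph i).Adj w (f x)}

theorem mem_fiber {w : W} {x : V} : x ∈ fiber f w ↔ f x = w := by
  simp [fiber]

theorem mem_fiberNeighbors {w : W} {x : V} :
    x ∈ fiberNeighbors D f i w ↔ (D.colorGraph i).Adj w (f x) := by
  simp [fiberNeighbors]

theorem IsTwoColored.univ_subset_union_fiberNeighbors (hD : D.IsTwoColored i j) (w : W) :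
    univ ⊆ fiber f w ∪ fiberNeighbors D f i w ∪ fiberNeighbors D f j w := by
  intro x _
  simp only [mem_union, mem_fiber, mem_fiberNeighbors]
  by_cases hxw : f x = w
  · exact Or.inl (Or.inl hxw)
  · have : (D.colorGraph i ⊔ D.colorGraph j).Adj w (f x) := hD.sup_eq_top ▸ Ne.symm hxw
    exact or_assoc.2 (Or.inr this)

theorem IsTwoColored.card_le_card_fiber_add (hD : D.IsTwoColored i j) (w : W) :
    Fintype.card V ≤ #(fiber f w) + #(fiberNeighbors D f i w) + #(fiberNeighbors D f j w) :=
  (card_le_card (hD.univ_subset_union_fiberNeighbors w)).trans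
    ((card_union_le _ _).trans (Nat.add_le_add_right (card_union_le _ _) _))

namespace IsBlowup

theorem fiber_nonempty (hf : IsBlowup C D f) (w : W) : (fiber f w).Nonempty := by
  obtain ⟨x, hx⟩ := hf.surjective w
  exact ⟨x, mem_fiber.2 hx⟩

theorem isCompleteBetween_fiber (hf : IsBlowup C D f) (w : W) :
    (C.colorGraph i).IsCompleteBetween (fiber f w) (fiberNeighbors D f i w) := by
  intro x hx y hy
  obtain rfl := mem_fiber.1 hx
  have hadj := mem_fiberNeighbors.1 hy
  exact (hf.adj_iff hadj.1).2 hadj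

theorem fiberNeighbors_nonempty [Nontrivial W] (hf : IsBlowup C D f)
    (hi : (D.colorGraph i).Preconnected) (w : W) : (fiberNeighbors D f i w).Nonempty := by
  obtain ⟨w', hw'⟩ := hi.exists_adj_of_nontrivial w
  obtain ⟨x, rfl⟩ := hf.surjective w'
  exact ⟨x, mem_fiberNeighbors.2 hw'⟩

theorem fiber_ne_univ [Nontrivial W] (hf : IsBlowup C D f) (w : W) : fiber f w ≠ univ := by
  obtain ⟨w', hw'⟩ := exists_ne w
  obtain ⟨x, rfl⟩ := hf.surjective w'
  exact fun h ↦ hw' (mem_fiber.1 (h ▸ mem_univ x))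

theorem fiberNeighbors_ne_univ (hf : IsBlowup C D f) (w : W) : fiberNeighbors D f i w ≠ univ :=
  ne_univ_of_isCompleteBetween (hf.isCompleteBetween_fiber w).symm (hf.fiber_nonempty w)

/-- Cliques of colors `i` and `j` in the fibers unite to a clique, so a bound on its size
turns into a bound on `V`. -/
theorem mul_card_le (hf : IsBlowup C D f) (hD : D.IsTwoColored i j) {a m x : ℕ}
    (hclique : ∀ K : Finset V, (C.colorGraph i ⊔ C.colorGraph j).IsClique K → #K ≤ m)
    (hfiber : ∀ w, ∃ K ⊆ fiber f w, (C.colorGraph i ⊔ C.colorGraph j).IsClique (K : Set V) ∧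
      a * #(fiber f w) ≤ #K * x) : a * Fintype.card V ≤ m * x := by
  have : Finite W := .of_surjective f hf.surjective
  have : Fintype W := .ofFinite W
  choose K hK hKclique hKcard using hfiber
  have hKf {w : W} {y : V} (hy : y ∈ K w) : f y = w := mem_fiber.1 (hK w hy)
  have hdisj : (Set.univ : Set W).PairwiseDisjoint K := fun w _ w' _ hww' ↦
    disjoint_left.2 fun y hy hy' ↦ hww' ((hKf hy).symm.trans (hKf hy'))
  have hunion : (C.colorGraph i ⊔ C.colorGraph j).IsClique (univ.biUnion K : Finset V) := by
    intro y hy y' hy' hyy'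
    simp only [coe_biUnion, Set.mem_iUnion] at hy hy'
    obtain ⟨w, -, hy⟩ := hy
    obtain ⟨w', -, hy'⟩ := hy'
    obtain rfl | hww' := eq_or_ne w w'
    · exact hKclique w hy hy' hyy'
    · exact hf.sup_adj hD (by rwa [hKf hy, hKf hy'])
  calc a * Fintype.card V = ∑ w, a * #(fiber f w) := by
        rw [← mul_sum, ← card_univ, card_eq_sum_card_fiberwise fun y _ ↦ mem_univ (f y)]
        rfl
    _ ≤ ∑ w, #(K w) * x := sum_le_sum fun w _ ↦ hKcard w
    _ = #(univ.biUnion K) * x := by rw [← sum_mul, card_biUnion (by simpa using hdisj)]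
    _ ≤ m * x := Nat.mul_le_mul_right x (hclique _ hunion)

end IsBlowup

end Blowup

section TwoColoredBlowup

variable [Fintype V]

namespace IsBlowup

variable [Nontrivial W]

theorem cliqueFreeOn_two_fiber (hf : IsBlowup C D f) (hi : (D.colorGraph i).Preconnected)
    (h : (C.colorGraph i).CliqueFreeOn Set.univ 3) (w : W) :
    (C.colorGraph i).CliqueFreeOn (fiber f w) 2 :=
  cliqueFreeOn_of_isCompleteBetween (hf.isCompleteBetween_fiber w)
    (hf.fiberNeighbors_nonempty hi w) (h.subset _ (Set.subset_univ _))

theorem pawFreeOn_fiber (hf : IsBlowup C D f) (hi : (D.colorGraph i).Preconnected)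
    (h : H2FreeOn (C.colorGraph i) Set.univ) (w : W) : PawFreeOn (C.colorGraph i) (fiber f w) :=
  (h.subset (Set.subset_univ _)).pawFreeOn_of_isCompleteBetween (hf.isCompleteBetween_fiber w)
    (hf.fiberNeighbors_nonempty hi w)

variable [Fintype κ]

theorem card_le_weight_of_triangle_triangle (hf : IsBlowup C D f) (hD : D.IsTwoColored i j)
    (hC : C.BoundOnProper) (h : C.Avoids t Set.univ) (hi : t i = .triangle)
    (hj : t j = .triangle) : Fintype.card V ≤ weight t := by
  rw [weight_triangle_triangle hD.ne hi hj, ← one_mul (Fintype.card V)]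
  refine hf.mul_card_le hD (fun K hK ↦ ?_) fun w ↦ ?_
  · exact card_le_five_of_cliqueFreeOn_three hK ((h.subset (Set.subset_univ _)).freeOn hi)
      ((h.subset (Set.subset_univ _)).freeOn hj)
  · obtain ⟨x, hx⟩ := hf.fiber_nonempty w
    refine ⟨{x}, singleton_subset_iff.2 hx, by simp, ?_⟩
    have := hC (hf.fiber_ne_univ w) (((h.subset (Set.subset_univ _)).update (i := i) (p := .edge)
      (hf.cliqueFreeOn_two_fiber hD.left (h.freeOn hi) w)).update (i := j) (p := .edge)
      (hf.cliqueFreeOn_two_fiber hD.right (h.freeOn hj) w))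
    simpa

theorem card_le_weight_of_triangle_H2 (hf : IsBlowup C D f) (hD : D.IsTwoColored i j)
    (hC : C.BoundOnProper) (h : C.Avoids t Set.univ) (hi : t i = .triangle)
    (hj : t j = .H2) : Fintype.card V ≤ weight t := by
  have hweight := four_mul_weight_update_triangle_edge_le hD.ne hi hj
  suffices 2 * Fintype.card V ≤
      8 * weight (Function.update (Function.update t i .edge) j .triangle) by omega
  have hedge := two_mul_weight_update_edge_le (t := Function.update t i .edge) (i := j)
  refine hf.mul_card_le hD (fun K hK ↦ ?_) fun w ↦ ?_
  · exact H2FreeOn.card_le_eight_of_cliqueFreeOn_three hK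
      ((h.subset (Set.subset_univ _)).freeOn hi) ((h.subset (Set.subset_univ _)).freeOn hj)
  have hbound {p : Pattern} (hp : p.FreeOn (C.colorGraph j) (fiber f w)) :=
    hC (hf.fiber_ne_univ w) (((h.subset (Set.subset_univ _)).update (i := i) (p := .edge)
      (hf.cliqueFreeOn_two_fiber hD.left (h.freeOn hi) w)).update hp)
  obtain ⟨n, K, hK, hKclique, hcard⟩ : ∃ n, ∃ K : Finset V, (K : Set V) ⊆ fiber f w ∧
      (C.colorGraph j).IsNClique n K ∧ 2 * #(fiber f w) ≤
        n * weight (Function.update (Function.update t i .edge) j .triangle) := by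
    by_cases h₂ : (C.colorGraph j).CliqueFreeOn (fiber f w) 2
    · obtain ⟨x, hx⟩ := hf.fiber_nonempty w
      have := hbound (p := .edge) h₂
      exact ⟨1, {x}, by simpa using hx, by simp [isNClique_iff], by omega⟩
    by_cases h₃ : (C.colorGraph j).CliqueFreeOn (fiber f w) 3
    · obtain ⟨K, hK, hK₂⟩ := exists_isNClique_of_not_cliqueFreeOn h₂
      have := hbound (p := .triangle) h₃
      exact ⟨2, K, hK, hK₂, by omega⟩
    · obtain ⟨K, hK, hK₃⟩ := exists_isNClique_of_not_cliqueFreeOn h₃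
      have := hbound (p := .paw) (hf.pawFreeOn_fiber hD.right (h.freeOn hj) w)
      rw [weight_update_paw] at this
      exact ⟨3, K, hK, hK₃, by omega⟩
  exact ⟨K, coe_subset.1 hK, hKclique.isClique.mono le_sup_right, hKclique.card_eq ▸ hcard⟩

theorem card_fiberNeighbors_le (hf : IsBlowup C D f) (hD : D.IsTwoColored i j)
    (hC : C.BoundOnProper) (h : C.Avoids t Set.univ) (hj : t j = .H2) {w : W}
    (hN : (C.colorGraph i).CliqueFreeOn (fiberNeighbors D f i w) 2) :
    #(fiberNeighbors D f i w) ≤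
      3 * weight (Function.update (Function.update t i .edge) j .edge) +
        max 1 (weight (Function.update (Function.update t i .edge) j .edge) / 2) := by
  obtain ⟨w', hw'⟩ := hD.left.exists_adj_of_nontrivial w
  have havoids := (h.subset (Set.subset_univ _)).update (p := .edge) hN
  have hsub : fiber f w' ⊆ fiberNeighbors D f i w := fun x hx ↦
    mem_fiberNeighbors.2 (mem_fiber.1 hx ▸ hw')
  obtain hrest | hrest := (fiberNeighbors D f i w \ fiber f w').eq_empty_or_nonempty
  · have hN' : fiberNeighbors D f i w = fiber f w' :=
      (sdiff_eq_empty_iff_subset.1 hrest).antisymm hsub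
    rw [hN'] at havoids ⊢
    have hbound := hC (hf.fiber_ne_univ w')
      (havoids.update (p := .paw) (hf.pawFreeOn_fiber hD.right (h.freeOn hj) w'))
    rw [weight_update_paw] at hbound
    omega
  · have hcomplete : (C.colorGraph j).IsCompleteBetween (fiber f w')
        (fiberNeighbors D f i w \ fiber f w' : Finset V) := by
      intro x hx y hy
      obtain ⟨hyN, hyw'⟩ := mem_sdiff.1 hy
      have hxy : f x ≠ f y := fun heq ↦ hyw' (mem_fiber.2 (heq ▸ mem_fiber.1 hx))
      exact (hf.sup_adj hD hxy).resolve_left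
        fun hadj ↦ not_cliqueFreeOn_two_of_adj hadj (hsub hx) hyN hN
    rw [← card_sdiff_add_card_eq_card hsub, add_comm]
    refine hC.card_add_card_le hcomplete (hf.fiber_nonempty w') hrest ?_ ?_
    · rwa [coe_sdiff, Set.union_sdiff_cancel (coe_subset.2 hsub)]
    · rw [Function.update_of_ne hD.ne.symm, hj]

theorem card_fiberNeighbors_le_of_not_cliqueFreeOn_two (hf : IsBlowup C D f)
    (hD : D.IsTwoColored i j) (hC : C.BoundOnProper) (h : C.Avoids t Set.univ) (hi : t i = .H2)
    (hj : t j = .H2) {w : W} (hcard : 3 ≤ #(fiber f w))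
    (hedge : ¬ (C.colorGraph i).CliqueFreeOn (fiber f w) 2) :
    #(fiberNeighbors D f i w) ≤
      3 * weight (Function.update (Function.update t i .edge) j .edge) +
        max 1 (weight (Function.update (Function.update t i .edge) j .edge) / 2) := by
  have hH2 : H2FreeOn (C.colorGraph i) (fiberNeighbors D f i w ∪ fiber f w) :=
    (h.subset (Set.subset_univ _)).freeOn hi
  exact hf.card_fiberNeighbors_le hD hC h hj
    (hH2.cliqueFreeOn_two_of_isCompleteBetween (hf.isCompleteBetween_fiber w).symm hedge hcard)

/-- The fiber, its `i`-neighbors and its `j`-neighbors cover `V`. -/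
theorem card_le_weight_of_not_cliqueFreeOn_two_fiber (hf : IsBlowup C D f)
    (hD : D.IsTwoColored i j) (hC : C.BoundOnProper) (h : C.Avoids t Set.univ) (hi : t i = .H2)
    (hj : t j = .H2) {w : W} (hcard : 3 ≤ #(fiber f w))
    (hi_edge : ¬ (C.colorGraph i).CliqueFreeOn (fiber f w) 2) : Fintype.card V ≤ weight t := by
  rw [weight_H2_H2 hD.ne hi hj]
  have hcover := hD.card_le_card_fiber_add (f := f) w
  have hpos : 0 < weight (Function.update (Function.update t i .edge) j .edge) := weight_pos
  have hNi := hf.card_fiberNeighbors_le_of_not_cliqueFreeOn_two hD hC h hi hj hcard hi_edge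
  have hsub {s : Set V} := h.subset (Set.subset_univ s)
  have hF {p q : Pattern} (hp : p.FreeOn (C.colorGraph i) (fiber f w))
      (hq : q.FreeOn (C.colorGraph j) (fiber f w)) :=
    hC (hf.fiber_ne_univ w) ((hsub.update hp).update hq)
  have hi_paw := hf.pawFreeOn_fiber hD.left (h.freeOn hi) w
  have hj_paw := hf.pawFreeOn_fiber hD.right (h.freeOn hj) w
  by_cases hj_edge : (C.colorGraph j).CliqueFreeOn (fiber f w) 2
  · have hNj : #(fiberNeighbors D f j w) ≤
        weight (Function.update (Function.update t i .H2) j .triangle) := by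
      rw [← hi, Function.update_eq_self]
      exact hC (hf.fiberNeighbors_ne_univ w) (hsub.update
        (H2FreeOn.cliqueFreeOn_three_of_isCompleteBetween (hf.isCompleteBetween_fiber w).symm
          (one_lt_card_iff_nontrivial.1 (by omega)) (hsub.freeOn hj)))
    have hweight := eight_mul_weight_update_H2_triangle_le (t := t) hD.ne
    by_cases hi_tri : (C.colorGraph i).CliqueFreeOn (fiber f w) 3
    · have hfiber := hF (p := .triangle) (q := .edge) hi_tri hj_edge
      have := two_mul_weight_update_triangle_le (t := Function.update t i .edge) (i := j)
      rw [weight_update_swap hD.ne] at hfiber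
      omega
    · have hfiber := hF (p := .paw) (q := .edge) hi_paw hj_edge
      rw [weight_update_swap hD.ne, weight_update_paw] at hfiber
      have hNi_one : ¬ 1 < #(fiberNeighbors D f i w) := fun hN ↦ hi_tri
        (H2FreeOn.cliqueFreeOn_three_of_isCompleteBetween (hf.isCompleteBetween_fiber w)
          (one_lt_card_iff_nontrivial.1 hN) (hsub.freeOn hi))
      omega
  · have hNj := hf.card_fiberNeighbors_le_of_not_cliqueFreeOn_two hD.symm hC h hj hi hcard hj_edge
    have hfiber := hF (p := .paw) (q := .paw) hi_paw hj_paw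
    rw [weight_update_paw, weight_update_swap hD.ne, weight_update_paw] at hfiber
    rw [Function.update_comm hD.ne.symm] at hNj
    omega

theorem card_le_weight_of_H2_H2 (hf : IsBlowup C D f) (hD : D.IsTwoColored i j)
    (hC : C.BoundOnProper) (h : C.Avoids t Set.univ) (hi : t i = .H2) (hj : t j = .H2) :
    Fintype.card V ≤ weight t := by
  by_cases hlarge : ∃ w, 3 ≤ #(fiber f w) ∧
      ¬ (C.colorGraph i ⊔ C.colorGraph j).CliqueFreeOn (fiber f w) 2
  · obtain ⟨w, hcard, hedge⟩ := hlarge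
    obtain ⟨x, hx, y, hy, hxy | hxy⟩ := exists_adj_of_not_cliqueFreeOn_two hedge
    · exact hf.card_le_weight_of_not_cliqueFreeOn_two_fiber hD hC h hi hj hcard
        (not_cliqueFreeOn_two_of_adj hxy hx hy)
    · exact hf.card_le_weight_of_not_cliqueFreeOn_two_fiber hD.symm hC h hj hi hcard
        (not_cliqueFreeOn_two_of_adj hxy hx hy)
  push Not at hlarge
  have hsub {s : Set V} := h.subset (Set.subset_univ s)
  rw [weight_H2_H2 hD.ne hi hj, ← one_mul (Fintype.card V)]
  refine hf.mul_card_le hD (fun K hK ↦ ?_) fun w ↦ ?_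
  · exact H2FreeOn.card_le_seventeen hK (hsub.freeOn hi) (hsub.freeOn hj)
  by_cases hfree : (C.colorGraph i ⊔ C.colorGraph j).CliqueFreeOn (fiber f w) 2
  · obtain ⟨x, hx⟩ := hf.fiber_nonempty w
    have := hC (hf.fiber_ne_univ w) ((hsub.update (i := i) (p := .edge)
      fun K hK hK' ↦ hfree hK (hK'.mono le_sup_left)).update (i := j) (p := .edge)
      fun K hK hK' ↦ hfree hK (hK'.mono le_sup_right))
    exact ⟨{x}, singleton_subset_iff.2 hx, by simp, by simpa⟩
  · obtain ⟨K, hK, hK₂⟩ := exists_isNClique_of_not_cliqueFreeOn hfree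
    have hcard : ¬ 3 ≤ #(fiber f w) := fun hcard ↦ hfree (hlarge w hcard)
    have hpos : 0 < weight (Function.update (Function.update t i .edge) j .edge) := weight_pos
    refine ⟨K, coe_subset.1 hK, hK₂.isClique, ?_⟩
    rw [hK₂.card_eq]
    omega

theorem card_le_weight_of_eq_triangle_or_eq_H2 (hf : IsBlowup C D f) (hD : D.IsTwoColored i j)
    (hC : C.BoundOnProper) (h : C.Avoids t Set.univ) (hi : t i = .triangle ∨ t i = .H2)
    (hj : t j = .triangle ∨ t j = .H2) : Fintype.card V ≤ weight t := by
  obtain hi | hi := hi <;> obtain hj | hj := hj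
  · exact hf.card_le_weight_of_triangle_triangle hD hC h hi hj
  · exact hf.card_le_weight_of_triangle_H2 hD hC h hi hj
  · exact hf.card_le_weight_of_triangle_H2 hD.symm hC h hj hi
  · exact hf.card_le_weight_of_H2_H2 hD hC h hi hj

theorem card_le_weight_of_eq_triangle_or_eq_H2_left (hf : IsBlowup C D f)
    (hD : D.IsTwoColored i j) (hC : C.BoundOnProper) (h : C.Avoids t Set.univ)
    (hi : t i = .triangle ∨ t i = .H2) : Fintype.card V ≤ weight t := by
  cases hj : t j with
  | edge => exact absurd hj (hf.ne_edge hD.right h)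
  | triangle => exact hf.card_le_weight_of_eq_triangle_or_eq_H2 hD hC h hi (.inl hj)
  | paw =>
    refine h.card_le_weight_of_paw hj (hf.preconnected hD.right) fun h' ↦ ?_
    exact hf.card_le_weight_of_eq_triangle_or_eq_H2 hD hC h'
      (by rwa [Function.update_of_ne hD.ne]) (.inl (Function.update_self ..))
  | H2 => exact hf.card_le_weight_of_eq_triangle_or_eq_H2 hD hC h hi (.inr hj)

theorem card_le_weight (hf : IsBlowup C D f) (hD : D.IsTwoColored i j) (hC : C.BoundOnProper)
    (h : C.Avoids t Set.univ) : Fintype.card V ≤ weight t := by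
  cases hi : t i with
  | edge => exact absurd hi (hf.ne_edge hD.left h)
  | triangle => exact hf.card_le_weight_of_eq_triangle_or_eq_H2_left hD hC h (.inl hi)
  | paw =>
    refine h.card_le_weight_of_paw hi (hf.preconnected hD.left) fun h' ↦ ?_
    exact hf.card_le_weight_of_eq_triangle_or_eq_H2_left hD hC h' (.inl (Function.update_self ..))
  | H2 => exact hf.card_le_weight_of_eq_triangle_or_eq_H2_left hD hC h (.inr hi)

end IsBlowup

end TwoColoredBlowup

theorem Avoids.card_le_weight [Fintype V] [Fintype κ] (h : C.Avoids t Set.univ) :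
    Fintype.card V ≤ weight t := by
  induction hn : Fintype.card V using Nat.strong_induction_on generalizing V t with | _ n ih
  rw [← hn] at ih ⊢
  have hC : C.BoundOnProper := fun S t' hS hS' ↦ by
    have hrestrict : (C.comap (.subtype (· ∈ S))).Avoids t' Set.univ := fun i ↦ by
      rw [colorGraph_comap]
      exact (hS' i).induce
    obtain ⟨v, hv⟩ : ∃ v, v ∉ S := by simpa [eq_univ_iff_forall] using hS
    rw [← Fintype.card_coe]
    exact ih _ (by rw [Fintype.card_coe]; exact card_lt_univ_of_notMem hv) hrestrict rfl
  obtain hV | hV := subsingleton_or_nontrivial V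
  · exact (Fintype.card_le_one_iff_subsingleton.2 hV).trans weight_pos
  obtain hjoin | ⟨W, _, D, f, i, j, hf, hD⟩ := C.isJoin_or_exists_isBlowup
  · exact hC.card_le_weight_of_isJoin hjoin h
  · exact hf.card_le_weight hD hC h

end GallaiColoring

end UpperBound

section LexProduct

namespace GallaiColoring

variable {V W X κ : Type*} {F : SimpleGraph X} {i j l : κ}

/-- The lexicographic product: a copy of `D` is substituted for every vertex of `C`. -/
noncomputable def lex (C : GallaiColoring V κ) (D : GallaiColoring W κ) :
    GallaiColoring (V × W) κ where
  color x y := if x.1 = y.1 then D.color x.2 y.2 else C.color x.1 y.1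
  symm x y := by rw [C.symm, D.symm, if_congr eq_comm rfl rfl]
  gallai x y z hxy hxz hyz := by
    by_cases hxy' : x.1 = y.1
    · by_cases hxz' : x.1 = z.1
      · have hyz' : y.1 = z.1 := hxy'.symm.trans hxz'
        simpa only [if_pos hxy', if_pos hxz', if_pos hyz'] using D.gallai
          (fun h ↦ hxy (Prod.ext hxy' h)) (fun h ↦ hxz (Prod.ext hxz' h))
          (fun h ↦ hyz (Prod.ext hyz' h))
      · exact .inr (.inr (by simp only [← hxy', if_neg hxz']))
    · by_cases hxz' : x.1 = z.1
      · exact .inr (.inl (by simp only [if_neg hxy', ← hxz', if_neg (Ne.symm hxy'), C.symm y.1]))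
      · by_cases hyz' : y.1 = z.1
        · exact .inl (by simp only [← hyz', if_neg hxy'])
        · simpa only [if_neg hxy', if_neg hxz', if_neg hyz'] using C.gallai hxy' hxz' hyz'

/-- The coloring with the edges of `G` in color `i` and all other edges in color `j`. -/
noncomputable def ofGraph (G : SimpleGraph V) (i j : κ) : GallaiColoring V κ where
  color x y := if G.Adj x y then i else j
  symm x y := by rw [if_congr (G.adj_comm x y) rfl rfl]
  gallai x y z _ _ _ := by split_ifs <;> simp

theorem lex_adj {C : GallaiColoring V κ} {D : GallaiColoring W κ} {x y : V × W} :
    ((C.lex D).colorGraph i).Adj x y ↔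
      (C.colorGraph i).Adj x.1 y.1 ∨ x.1 = y.1 ∧ (D.colorGraph i).Adj x.2 y.2 := by
  by_cases h : x.1 = y.1 <;> simp [colorGraph, lex, h, Prod.ext_iff]

theorem colorGraph_ofGraph_left {G : SimpleGraph V} (hij : i ≠ j) :
    (ofGraph G i j).colorGraph i = G := by
  ext x y
  by_cases h : G.Adj x y <;> simp [colorGraph, ofGraph, h, hij.symm, G.ne_of_adj]

theorem colorGraph_ofGraph_right {G : SimpleGraph V} (hij : i ≠ j) :
    (ofGraph G i j).colorGraph j = Gᶜ := by
  ext x y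
  by_cases h : G.Adj x y <;> simp [colorGraph, ofGraph, h, hij]

theorem colorGraph_ofGraph_of_ne {G : SimpleGraph V} (hi : l ≠ i) (hj : l ≠ j) :
    (ofGraph G i j).colorGraph l = ⊥ := by
  ext x y
  by_cases h : G.Adj x y <;> simp [colorGraph, ofGraph, h, hi.symm, hj.symm]

theorem free_lex_of_isEmpty_hom {C : GallaiColoring V κ} {D : GallaiColoring W κ}
    (hD : D.colorGraph i = ⊥) (hF : IsEmpty (F →g C.colorGraph i)) :
    F.Free ((C.lex D).colorGraph i) := by
  rintro ⟨f⟩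
  exact hF.false ⟨fun x ↦ (f x).1, fun h ↦ by simpa [lex_adj, hD] using f.toHom.map_adj h⟩

theorem free_lex_of_preconnected {C : GallaiColoring V κ} {D : GallaiColoring W κ}
    (hC : C.colorGraph i = ⊥) (hF : F.Preconnected) (hD : F.Free (D.colorGraph i)) :
    F.Free ((C.lex D).colorGraph i) := by
  rintro ⟨f⟩
  have hadj {x y : X} (h : F.Adj x y) :
      (f x).1 = (f y).1 ∧ (D.colorGraph i).Adj (f x).2 (f y).2 := by
    simpa [lex_adj, hC] using f.toHom.map_adj h
  have hfst (x y : X) : (f x).1 = (f y).1 := by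
    obtain ⟨p⟩ := hF x y
    induction p with
    | nil => rfl
    | cons h _ ih => exact (hadj h).1.trans ih
  exact hD ⟨⟨fun x ↦ (f x).2, fun h ↦ (hadj h).2⟩,
    fun x y h ↦ f.injective (Prod.ext (hfst x y) h)⟩

theorem free_comap {C : GallaiColoring V κ} (f : W ↪ V) (h : F.Free (C.colorGraph i)) :
    F.Free ((C.comap f).colorGraph i) :=
  fun hF ↦ h (hF.trans (colorGraph_comap (C := C) f ▸ (Embedding.comap f _).isContained))

section Admits

variable {U : κ → Type*} {F : ∀ i, SimpleGraph (U i)} {A S : Finset κ} {a N : ℕ}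

/-- Some Gallai coloring on `N` vertices, all of whose colors are in `A`, has no copy of `F i` in
color `i`. -/
def Admits (F : ∀ i, SimpleGraph (U i)) (A : Finset κ) (N : ℕ) : Prop :=
  ∃ C : GallaiColoring (Fin N) κ,
    (∀ i ∉ A, C.colorGraph i = ⊥) ∧ ∀ i, (F i).Free (C.colorGraph i)

theorem admits_card [Fintype V] (C : GallaiColoring V κ) (hA : ∀ i ∉ A, C.colorGraph i = ⊥)
    (hF : ∀ i, (F i).Free (C.colorGraph i)) : Admits F A (Fintype.card V) := by
  refine ⟨C.comap (Fintype.equivFin V).symm.toEmbedding, fun i hi ↦ ?_, fun i ↦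
    free_comap _ (hF i)⟩
  rw [colorGraph_comap, hA i hi]
  rfl

theorem Admits.lex [Fintype V] {C : GallaiColoring V κ} (h : Admits F A N)
    (hconn : ∀ i, (F i).Preconnected) (hA : ∀ i ∈ A, C.colorGraph i = ⊥)
    (hS : ∀ i ∉ S, C.colorGraph i = ⊥) (hF : ∀ i ∉ A, IsEmpty (F i →g C.colorGraph i)) :
    Admits F (S ∪ A) (Fintype.card V * N) := by
  obtain ⟨D, hDA, hD⟩ := h
  rw [← Fintype.card_fin N, ← Fintype.card_prod]
  refine admits_card (C.lex D) (fun i hi ↦ ?_) fun i ↦ ?_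
  · rw [notMem_union] at hi
    ext x y
    simp [lex_adj, hS i hi.1, hDA i hi.2]
  · by_cases hi : i ∈ A
    · exact free_lex_of_preconnected (hA i hi) (hconn i) (hD i)
    · exact free_lex_of_isEmpty_hom (hDA i hi) (hF i hi)

theorem isEmpty_hom_bot {F : SimpleGraph X} (hF : F ≠ ⊥) :
    IsEmpty (F →g (⊥ : SimpleGraph V)) := by
  obtain ⟨x, y, hxy⟩ := ne_bot_iff_exists_adj.1 hF
  exact ⟨fun f ↦ f.map_adj hxy⟩

theorem Admits.pair_mul [Fintype V] {G : SimpleGraph V} (h : Admits F A N)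
    (hconn : ∀ i, (F i).Preconnected) (hedge : ∀ i, F i ≠ ⊥) (f : Gᶜ →g G) (hij : i ≠ j)
    (hi : i ∉ A) (hj : j ∉ A) (hFi : IsEmpty (F i →g G)) (hFj : IsEmpty (F j →g G)) :
    Admits F ({i, j} ∪ A) (Fintype.card V * N) := by
  have hbot {l : κ} (hl : l ∉ ({i, j} : Finset κ)) : (ofGraph G i j).colorGraph l = ⊥ := by
    simp only [mem_insert, mem_singleton, not_or] at hl
    exact colorGraph_ofGraph_of_ne hl.1 hl.2
  refine h.lex hconn (C := ofGraph G i j) (fun l hl ↦ hbot ?_) (fun l ↦ hbot) fun l _ ↦ ?_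
  · simp [ne_of_mem_of_not_mem hl hi, ne_of_mem_of_not_mem hl hj]
  obtain rfl | hli := eq_or_ne l i
  · rwa [colorGraph_ofGraph_left hij]
  obtain rfl | hlj := eq_or_ne l j
  · rw [colorGraph_ofGraph_right hij]
    exact ⟨fun g ↦ hFj.false (f.comp g)⟩
  rw [colorGraph_ofGraph_of_ne hli hlj]
  exact isEmpty_hom_bot (hedge l)

theorem Admits.alternatingPow_mul [Fintype V] {G : SimpleGraph V} (h : Admits F A N)
    (hconn : ∀ i, (F i).Preconnected) (hedge : ∀ i, F i ≠ ⊥) (f : Gᶜ →g G)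
    (hG : ∀ i ∈ S, IsEmpty (F i →g G)) (hSA : Disjoint S A)
    (hone : ∀ i ∈ S, Admits F (insert i A) (a * N)) :
    Admits F (S ∪ A) (alternatingPow a (Fintype.card V) #S * N) := by
  induction hn : #S using Nat.twoStepInduction generalizing S with
  | zero => simpa [card_eq_zero.1 hn, alternatingPow] using h
  | one =>
    obtain ⟨i, rfl⟩ := card_eq_one.1 hn
    simpa [alternatingPow] using hone i (mem_singleton_self i)
  | more n ih _ =>
    obtain ⟨i, S', hi, rfl, hS'⟩ := card_eq_succ.1 hn
    obtain ⟨j, S, hj, rfl, hS⟩ := card_eq_succ.1 hS'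
    simp only [disjoint_insert_left, mem_insert, forall_eq_or_imp, not_or] at hi hG hSA hone
    rw [alternatingPow_add_two, mul_assoc, insert_eq, insert_eq, ← union_assoc, union_assoc,
      ← insert_eq]
    refine (ih hG.2.2 hSA.2.2 hone.2.2 hS).pair_mul hconn hedge f hi.1 ?_ ?_ hG.1 hG.2.1
    · simp [hi.2, hSA.1]
    · simp [hj, hSA.2.1]

end Admits

end GallaiColoring

end LexProduct

section Paley

/-- The Paley graph of order 17, which has no `K₄` and is self-complementary: the nonzero squares
modulo 17 are `±1, ±2, ±4, ±8`. -/
abbrev paleyGraph17 : SimpleGraph (Fin 17) :=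
  circulantGraph ({1, 2, 4, 8} : Finset (Fin 17))

theorem paleyGraph17_adj_sub {x y d : Fin 17} :
    paleyGraph17.Adj (x - d) (y - d) ↔ paleyGraph17.Adj x y := by
  simp only [sub_eq_add_neg, circulantGraph_adj_translate]

/-- The self-complementarity of the Paley graph, given by multiplication by the nonresidue 3. -/
def paleyGraph17ComplHom : paleyGraph17ᶜ →g paleyGraph17 where
  toFun x := 3 * x
  map_rel' {x y} := by
    revert x y
    decide

/-- The self-complementarity of the 5-cycle, given by multiplication by the nonresidue 2. -/
def cycleGraph5ComplHom : (cycleGraph 5)ᶜ →g cycleGraph 5 where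
  toFun x := 2 * x
  map_rel' {x y} := by
    revert x y
    decide

theorem isEmpty_hom_cycleGraph5 : IsEmpty ((⊤ : SimpleGraph (Fin 3)) →g cycleGraph 5) := by
  refine ⟨fun f ↦ ?_⟩
  have htri : ∀ x y z, (cycleGraph 5).Adj x y → (cycleGraph 5).Adj x z →
      ¬ (cycleGraph 5).Adj y z := by decide
  have hadj {a b : Fin 3} (h : a ≠ b) : (cycleGraph 5).Adj (f a) (f b) := f.map_adj h
  exact htri (f 0) (f 1) (f 2) (hadj (by decide)) (hadj (by decide)) (hadj (by decide))

theorem isEmpty_hom_paleyGraph17 : IsEmpty ((⊤ : SimpleGraph (Fin 4)) →g paleyGraph17) := by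
  refine ⟨fun f ↦ ?_⟩
  have hnbhd : ∀ x, paleyGraph17.Adj 0 x → ∀ y, paleyGraph17.Adj 0 y → paleyGraph17.Adj x y →
      ∀ z, paleyGraph17.Adj 0 z → paleyGraph17.Adj x z → ¬ paleyGraph17.Adj y z := by decide
  have hadj {a b : Fin 4} (h : a ≠ b) : paleyGraph17.Adj (f a - f 0) (f b - f 0) :=
    paleyGraph17_adj_sub.2 (f.map_adj h)
  have hadj₀ {a : Fin 4} (h : 0 ≠ a) : paleyGraph17.Adj 0 (f a - f 0) := sub_self (f 0) ▸ hadj h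
  exact hnbhd (f 1 - f 0) (hadj₀ (by decide)) (f 2 - f 0) (hadj₀ (by decide))
    (hadj (by decide)) (f 3 - f 0) (hadj₀ (by decide)) (hadj (by decide)) (hadj (by decide))

end Paley

section LowerBoundConstruction

variable {V W X Y κ : Type*}

theorem isEmpty_hom_top_of_card_lt [Fintype V] [Fintype W] (G : SimpleGraph W)
    (h : Fintype.card W < Fintype.card V) : IsEmpty ((⊤ : SimpleGraph V) →g G) :=
  ⟨fun f ↦ h.not_ge (Fintype.card_le_of_injective f f.injective_of_top_hom)⟩

theorem isEmpty_hom_of_isContained {A : SimpleGraph X} {B : SimpleGraph Y} {G : SimpleGraph V}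
    (hAB : A ⊑ B) (hA : IsEmpty (A →g G)) : IsEmpty (B →g G) := by
  obtain ⟨f⟩ := hAB
  exact ⟨fun g ↦ hA.false (g.comp f.toHom)⟩

namespace GallaiColoring

variable {U : κ → Type*} {F : ∀ i, SimpleGraph (U i)} {A : Finset κ} {N : ℕ} {i : κ}

theorem admits_empty_one [Nonempty κ] (hedge : ∀ i, F i ≠ ⊥) : Admits F ∅ 1 := by
  obtain ⟨i⟩ := ‹Nonempty κ›
  refine ⟨ofGraph ⊤ i i, fun l _ ↦ Subsingleton.elim _ _, fun l ↦ ?_⟩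
  rw [Subsingleton.elim ((ofGraph ⊤ i i).colorGraph l) ⊥]
  exact free_bot (hedge l)

theorem admits_singleton (hedge : ∀ i, F i ≠ ⊥) (hi : IsEmpty (U i ↪ Fin N)) :
    Admits F {i} N := by
  have hbot {l : κ} (hl : l ≠ i) : (ofGraph (⊤ : SimpleGraph (Fin N)) i i).colorGraph l = ⊥ :=
    colorGraph_ofGraph_of_ne hl hl
  refine ⟨ofGraph ⊤ i i, fun l hl ↦ hbot (notMem_singleton.1 hl), fun l ↦ ?_⟩
  obtain rfl | hl := eq_or_ne l i
  · exact fun ⟨f⟩ ↦ hi.false ⟨f, f.injective⟩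
  · exact hbot hl ▸ free_bot (hedge l)

theorem Admits.insert_two_mul (h : Admits F A N) (hconn : ∀ i, (F i).Preconnected)
    (hedge : ∀ i, F i ≠ ⊥) (hi : i ∉ A) (hFi : (⊤ : SimpleGraph (Fin 3)) ⊑ F i) :
    Admits F (insert i A) (2 * N) := by
  have hbot {l : κ} (hl : l ≠ i) : (ofGraph (⊤ : SimpleGraph (Fin 2)) i i).colorGraph l = ⊥ :=
    colorGraph_ofGraph_of_ne hl hl
  rw [insert_eq, ← Fintype.card_fin 2]
  refine h.lex hconn (fun l hl ↦ hbot (ne_of_mem_of_not_mem hl hi))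
    (fun l hl ↦ hbot (notMem_singleton.1 hl)) fun l _ ↦ ?_
  obtain rfl | hl := eq_or_ne l i
  · exact isEmpty_hom_of_isContained hFi (isEmpty_hom_top_of_card_lt _ (by simp))
  · exact hbot hl ▸ isEmpty_hom_bot (hedge l)

theorem admits_univ [Fintype κ] [Nonempty κ] (hconn : ∀ i, (F i).Preconnected)
    (hedge : ∀ i, F i ≠ ⊥) (S : Finset κ) (hS : ∀ i ∈ S, (⊤ : SimpleGraph (Fin 4)) ⊑ F i)
    (hS' : ∀ i ∈ S, IsEmpty (U i ↪ Fin 4)) (hK₃ : ∀ i ∉ S, (⊤ : SimpleGraph (Fin 3)) ⊑ F i) :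
    Admits F univ
      (alternatingPow 2 5 (Fintype.card κ - #S) * alternatingPow 4 17 #S) := by
  have hinner : Admits F S (alternatingPow 4 17 #S) := by
    simpa using (admits_empty_one hedge).alternatingPow_mul hconn hedge paleyGraph17ComplHom
      (fun i hi ↦ isEmpty_hom_of_isContained (hS i hi) isEmpty_hom_paleyGraph17)
      (disjoint_empty_right S) (a := 4) fun i hi ↦ by
        simpa using admits_singleton hedge (hS' i hi)
  rw [← card_compl, ← union_compl S, union_comm]
  simpa using hinner.alternatingPow_mul hconn hedge cycleGraph5ComplHom
    (fun i hi ↦ isEmpty_hom_of_isContained (hK₃ i (mem_compl.1 hi)) isEmpty_hom_cycleGraph5)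
    disjoint_compl_left fun i hi ↦
      hinner.insert_two_mul hconn hedge (mem_compl.1 hi) (hK₃ i (mem_compl.1 hi))

end GallaiColoring

end LowerBoundConstruction

section GallaiRamseyNumber

open GallaiColoring

variable {k r n N : ℕ} {H : SimpleGraph (Fin 5)} {i : Fin k}

theorem GH1_isContained_GH2 : GH1 ⊑ GH2 :=
  ⟨⟨⟨![0, 2, 4, 3, 1], by simp only [GH1, GH2]; decide⟩, by decide⟩⟩

theorem top_isContained_GH1 : (⊤ : SimpleGraph (Fin 4)) ⊑ GH1 :=
  ⟨⟨⟨Fin.castSucc, by simp only [GH1]; decide⟩, Fin.castSucc_injective 4⟩⟩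

theorem preconnected_of_eq_GH1_or_eq_GH2 (hH : H = GH1 ∨ H = GH2) : H.Preconnected := by
  obtain rfl | rfl := hH
  · simp only [GH1]
    decide
  · simp only [GH2]
    decide

theorem h2FreeOn_univ_of_free {V : Type*} {G : SimpleGraph V} (h : GH2.Free G) :
    H2FreeOn G Set.univ := by
  rintro v - x y z w ⟨-, hx⟩ ⟨-, hy⟩ ⟨-, hz⟩ ⟨-, hw⟩ hxy hxz hyz hxw
  by_contra! hne
  rw [mem_neighborSet] at hx hy hz hw
  refine h ⟨⟨⟨![y, w, z, v, x], fun {a b} hab ↦ ?_⟩, fun a b hab ↦ ?_⟩⟩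
  · fin_cases a <;> fin_cases b <;> simp_all [GH2, G.adj_comm]
  · have := hx.ne; have := hy.ne; have := hz.ne; have := hw.ne; have := hxy.ne; have := hxz.ne
    have := hyz.ne; have := hxw.ne
    fin_cases a <;> fin_cases b <;> simp_all [eq_comm]

/-- A coloring in the sense of `IsGallaiColoring`, bundled. -/
def ofIsGallaiColoring {c : Fin n → Fin n → Fin k} (hc : IsGallaiColoring c) :
    GallaiColoring (Fin n) (Fin k) where
  color := c
  symm := hc.1
  gallai x y z hxy hxz hyz := by
    by_contra! h
    exact hc.2 ⟨x, y, z, hxy, hxz, hyz, h⟩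

theorem isGallaiColoring_color (C : GallaiColoring (Fin n) (Fin k)) : IsGallaiColoring C.color := by
  refine ⟨C.symm, fun ⟨x, y, z, hxy, hxz, hyz, h₁, h₂, h₃⟩ ↦ ?_⟩
  have := C.gallai hxy hxz hyz
  tauto

theorem hasMonoCopy_color_iff {V : Type} {F : SimpleGraph V}
    (C : GallaiColoring (Fin n) (Fin k)) : HasMonoCopy F C.color i ↔ F ⊑ C.colorGraph i :=
  ⟨fun ⟨f, hf, h⟩ ↦ ⟨⟨⟨f, fun hab ↦ ⟨hf.ne hab.ne, h _ _ hab⟩⟩, hf⟩⟩,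
    fun ⟨f⟩ ↦ ⟨f, f.injective, fun _ _ hab ↦ (f.toHom.map_adj hab).2⟩⟩

theorem GR_eq_add_one {F : Fin k → Σ V : Type, SimpleGraph V}
    (hupper : ∀ C : GallaiColoring (Fin (N + 1)) (Fin k), ∃ i, (F i).2 ⊑ C.colorGraph i)
    (hlower : Admits (fun i ↦ (F i).2) univ N) : GR k F = N + 1 := by
  refine IsLeast.csInf_eq ⟨fun c hc ↦ ?_, fun n hn ↦ ?_⟩
  · exact (hupper (ofIsGallaiColoring hc)).imp fun i ↦
      (hasMonoCopy_color_iff (ofIsGallaiColoring hc)).2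
  · by_contra! hlt
    obtain ⟨C, -, hC⟩ := hlower
    let f : Fin n ↪ Fin N := Fin.castLEEmb (Nat.lt_succ_iff.1 hlt)
    obtain ⟨i, hi⟩ := hn _ (isGallaiColoring_color (C.comap f))
    exact free_comap f (hC i) ((hasMonoCopy_color_iff _).1 hi)

theorem weight_ite {κ : Type*} [Fintype κ] (S : Finset κ) :
    weight (fun i ↦ if i ∈ S then .H2 else .triangle) =
      alternatingPow 2 5 (Fintype.card κ - #S) * alternatingPow 4 17 #S := by
  simp [weight, ite_eq_iff, ← card_compl, compl_eq_univ_sdiff, filter_not]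

theorem exists_isContained_colorGraph {V κ : Type*} {U : κ → Type*} [Fintype V] [Fintype κ]
    (C : GallaiColoring V κ) {F : ∀ i, SimpleGraph (U i)} {S : Finset κ}
    (hS : ∀ i ∈ S, F i ⊑ GH2) (hS' : ∀ i ∉ S, F i ⊑ (⊤ : SimpleGraph (Fin 3)))
    (hcard :
      alternatingPow 2 5 (Fintype.card κ - #S) * alternatingPow 4 17 #S < Fintype.card V) :
    ∃ i, F i ⊑ C.colorGraph i := by
  by_contra hfree
  refine hcard.not_ge (weight_ite S ▸ Avoids.card_le_weight (C := C) fun i ↦ ?_)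
  have hi : ¬ F i ⊑ C.colorGraph i := fun h ↦ hfree ⟨i, h⟩
  split_ifs with hiS
  · exact h2FreeOn_univ_of_free fun h ↦ hi ((hS i hiS).trans h)
  · exact (cliqueFreeOn_univ _).2 (cliqueFree_iff_top_free.2 fun h ↦ hi ((hS' i hiS).trans h))

theorem mixKH_of_lt (hi : (i : ℕ) < r) : mixKH k r H i = ⟨Fin 5, H⟩ := if_pos hi

theorem mixKH_of_not_lt (hi : ¬ (i : ℕ) < r) : mixKH k r H i = ⟨Fin 3, ⊤⟩ := if_neg hi

theorem mixKH_preconnected (hH : H.Preconnected) : (mixKH k r H i).2.Preconnected := by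
  by_cases hi : (i : ℕ) < r
  · rwa [mixKH_of_lt hi]
  · rw [mixKH_of_not_lt hi]
    exact preconnected_top

theorem mixKH_ne_bot (hH : H ≠ ⊥) : (mixKH k r H i).2 ≠ ⊥ := by
  by_cases hi : (i : ℕ) < r
  · rwa [mixKH_of_lt hi]
  · rw [mixKH_of_not_lt hi]
    exact top_ne_bot

theorem GR_mixKH_eq (hk : 1 ≤ k) (hr : r ≤ k) (hK₄ : (⊤ : SimpleGraph (Fin 4)) ⊑ H)
    (hconn : H.Preconnected) (hH : H ⊑ GH2) :
    GR k (mixKH k r H) = alternatingPow 2 5 (k - r) * alternatingPow 4 17 r + 1 := by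
  have : Nonempty (Fin k) := ⟨⟨0, hk⟩⟩
  have hedge : H ≠ ⊥ := fun h ↦ free_bot top_ne_bot (h ▸ hK₄)
  let S : Finset (Fin k) := {i | (i : ℕ) < r}
  have hS : #S = r := by rw [Fin.card_filter_val_lt, min_eq_right hr]
  have hlt {i : Fin k} (hi : i ∈ S) : (i : ℕ) < r := (mem_filter_univ i).1 hi
  have hge {i : Fin k} (hi : i ∉ S) : ¬ (i : ℕ) < r := fun h ↦ hi ((mem_filter_univ i).2 h)
  have hupper (C : GallaiColoring (Fin (alternatingPow 2 5 (k - r) * alternatingPow 4 17 r + 1))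
      (Fin k)) : ∃ i, (mixKH k r H i).2 ⊑ C.colorGraph i := by
    refine exists_isContained_colorGraph C (S := S) (fun i hi ↦ ?_) (fun i hi ↦ ?_) ?_
    · rwa [mixKH_of_lt (hlt hi)]
    · rw [mixKH_of_not_lt (hge hi)]
      exact .rfl
    · simp [hS]
  have hlower := admits_univ (F := fun i ↦ (mixKH k r H i).2)
    (fun _ ↦ mixKH_preconnected hconn) (fun _ ↦ mixKH_ne_bot hedge) S
    (fun i hi ↦ by rwa [mixKH_of_lt (hlt hi)])
    (fun i hi ↦ by
      rw [mixKH_of_lt (hlt hi)]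
      exact ⟨fun f ↦ by simpa using Fintype.card_le_of_embedding f⟩)
    fun i hi ↦ by
      rw [mixKH_of_not_lt (hge hi)]
      exact .rfl
  rw [hS, Fintype.card_fin] at hlower
  exact GR_eq_add_one hupper hlower

end GallaiRamseyNumber

end GallaiRamsey

theorem GR_mixKH_odd_odd_general (H : SimpleGraph (Fin 5)) (hH : H = GH1 ∨ H = GH2) (k r : ℕ)
    (hk : 1 ≤ k) (hr : r ≤ k) :
    GR k (mixKH k r H) =
      2 ^ ((k - r) % 2) * 5 ^ ((k - r) / 2) * (4 ^ (r % 2) * 17 ^ (r / 2)) + 1 := by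
  have hconn := GallaiRamsey.preconnected_of_eq_GH1_or_eq_GH2 hH
  have hK₄ := GallaiRamsey.top_isContained_GH1
  have hGH1 := GallaiRamsey.GH1_isContained_GH2
  obtain rfl | rfl := hH
  · exact GallaiRamsey.GR_mixKH_eq hk hr hK₄ hconn hGH1
  · exact GallaiRamsey.GR_mixKH_eq hk hr (hK₄.trans hGH1) hconn .rfl

/-- Theorem 1.4, case (a₃): for H ∈ {H₁, H₂}, k ≥ 1, 0 ≤ r ≤ k with k - r and r both
odd, GR_k((k-r)K₃, rH) = 8·5^((k-r-1)/2)·17^((r-1)/2) + 1. -/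
theorem GR_mixKH_odd_odd (H : SimpleGraph (Fin 5)) (hH : H = GH1 ∨ H = GH2)
    (k r : ℕ) (hk : 1 ≤ k) (hr : r ≤ k) (h1 : Odd (k - r)) (h2 : Odd r) :
    GR k (mixKH k r H) = 8 * 5 ^ ((k - r - 1) / 2) * 17 ^ ((r - 1) / 2) + 1 := by
  rw [Nat.odd_iff] at h1 h2
  have hkr_div : (k - r) / 2 = (k - r - 1) / 2 := by omega
  have hr_div : r / 2 = (r - 1) / 2 := by omega
  rw [GR_mixKH_odd_odd_general H hH k r hk hr, h1, h2, hkr_div, hr_div]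
  ring
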